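/- arXiv:2211.01306 — 3 statements merged into one kernel-verified Lean document; each statement's English description precedes it below -/
import Mathlib

section
/- Let K ≥ 2, τ > 0, and β ∈ ℝ^K with all β_i > 0. Define h(x) = (∑_{j=1}^K β_j/x_j^τ)^{−K} ∏_{i=1}^K x_i^{−(τ+1)}, k(x) = ∑_{j=1}^K β_j/x_j^τ, and J_0 = 1/((K−1)! τ^{K−1} ∏_{i=1}^K β_i). Then for all indices i, k, m, n: (K(K+1) β_m β_n / (J_0 (1 + δ_{mn}))) ∫_{S_K} h(x) (log x_i − log x_k)² / (k(x)² x_m^τ x_n^τ) d^{K−1}x = τ^{−2} [ δ_{imn} + δ_{kmn} + 2δ_{ikmn} − 2δ_{im}δ_{kn} − 2δ_{in}δ_{km} − (2δ_{im} + 2δ_{in} − 2δ_{km} − 2δ_{kn} − δ_{imn} + δ_{kmn})(log β_i − log β_k) + (log β_i − log β_k)² + (1 − δ_{ik}) π²/3 ], where a Kronecker delta symbol with several indices equals 1 if all its indices are equal and 0 otherwise. -/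
open MeasureTheory Finset

noncomputable def fillMap (K : ℕ) (u : Fin (K - 1) → ℝ) : Fin K → ℝ :=
  fun i => if h : (i : ℕ) < K - 1 then u ⟨i, h⟩ else 1 - ∑ j, u j

/-- The `(K-1)`-dimensional Lebesgue measure on the probability simplex `S_K`. -/
noncomputable def simplexMeasure (K : ℕ) : Measure (Fin K → ℝ) :=
  Measure.map (fillMap K)
    (volume.restrict {u : Fin (K - 1) → ℝ | (∀ j, 0 ≤ u j) ∧ ∑ j, u j ≤ 1})

/-- The unnormalized Concrete density `h(x) = (∑_j β_j/x_j^τ)^{-K} ∏_i x_i^{-(τ+1)}`. -/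
noncomputable def hfun (K : ℕ) (β : Fin K → ℝ) (τ : ℝ) (x : Fin K → ℝ) : ℝ :=
  (∑ j, β j / x j ^ τ) ^ (-(K : ℝ)) * ∏ i, x i ^ (-(τ + 1))

/-- `k(x) = ∑_j β_j/x_j^τ`. -/
noncomputable def kfun (K : ℕ) (β : Fin K → ℝ) (τ : ℝ) (x : Fin K → ℝ) : ℝ :=
  ∑ j, β j / x j ^ τ

/-- `J_0 = 1/((K−1)! τ^{K−1} ∏_i β_i)`. -/
noncomputable def J0 (K : ℕ) (β : Fin K → ℝ) (τ : ℝ) : ℝ :=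
  1 / ((Nat.factorial (K - 1) : ℝ) * τ ^ (K - 1) * ∏ i, β i)

/-- Kronecker delta. -/
def kd {K : ℕ} (a b : Fin K) : ℝ := if a = b then 1 else 0


namespace ISaux
open Set Filter Topology Asymptotics

noncomputable def E (b : ℕ) (t : ℝ) : ℂ := ((Real.log t ^ b * Real.exp (-t) : ℝ) : ℂ)

lemma E_succ (b : ℕ) : E (b+1) = fun t => Real.log t • E b t := by
  funext t; simp only [E, pow_succ, Complex.real_smul]; push_cast; ring

lemma E_cont (b : ℕ) : LocallyIntegrableOn (E b) (Ioi 0) := by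
  apply ContinuousOn.locallyIntegrableOn _ measurableSet_Ioi
  unfold E
  apply Complex.continuous_ofReal.comp_continuousOn
  apply ContinuousOn.mul
  · apply ContinuousOn.pow
    exact Real.continuousOn_log.mono (fun x hx => by simpa using (ne_of_gt hx))
  · fun_prop

lemma E_top (b : ℕ) : ∀ a : ℝ, E b =O[atTop] (fun x : ℝ => x ^ (-a)) := by
  induction b with
  | zero =>
    intro a
    have := (isLittleO_exp_neg_mul_rpow_atTop one_pos (-a)).isBigO
    refine IsBigO.trans ?_ this
    apply IsBigO.of_bound 1
    filter_upwards with x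
    simp only [E, pow_zero, one_mul, neg_mul, Complex.norm_real]
    exact le_rfl
  | succ b ih =>
    intro a
    rw [E_succ]
    exact isBigO_rpow_top_log_smul (lt_add_one a) (ih (a+1))

lemma E_bot (b : ℕ) : ∀ a : ℝ, 0 < a → E b =O[𝓝[>] 0] (fun x : ℝ => x ^ (-a)) := by
  induction b with
  | zero =>
    intro a ha
    apply IsBigO.of_bound 1
    have h1 : Ioo (0:ℝ) 1 ∈ 𝓝[>] (0:ℝ) := Ioo_mem_nhdsGT one_pos
    filter_upwards [h1] with x hx
    simp only [E, pow_zero, one_mul, Complex.norm_real, Real.norm_eq_abs, Real.abs_exp]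
    have h2 : Real.exp (-x) ≤ 1 := by simpa using hx.1.le
    have h3 : 1 ≤ x ^ (-a) := Real.one_le_rpow_of_pos_of_le_one_of_nonpos hx.1 hx.2.le (by linarith)
    exact h2.trans (h3.trans (le_abs_self _))
  | succ b ih =>
    intro a ha
    rw [E_succ]
    exact isBigO_rpow_zero_log_smul (half_lt_self ha) (ih (a/2) (by positivity))

lemma E_conv (b : ℕ) (s : ℂ) (hs : 0 < s.re) : MellinConvergent (E b) s :=
  mellinConvergent_of_isBigO_rpow (E_cont b) (E_top b _) (lt_add_one _)
    (E_bot b _ (half_pos hs)) (half_lt_self hs)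

lemma E_deriv (b : ℕ) (s : ℂ) (hs : 0 < s.re) :
    HasDerivAt (mellin (E b)) (mellin (E (b+1)) s) s := by
  rw [E_succ]
  exact (mellin_hasDerivAt_of_isBigO_rpow (E_cont b) (E_top b _) (lt_add_one _)
    (E_bot b _ (half_pos hs)) (half_lt_self hs)).2

lemma mellin_E0 (s : ℂ) (hs : 0 < s.re) : mellin (E 0) s = Complex.Gamma s := by
  rw [Complex.Gamma_eq_integral hs, Complex.GammaIntegral_eq_mellin]
  congr 1; funext t; simp [E]

/-- real log-moments -/
noncomputable def M (a b : ℕ) : ℝ := ∫ g in Ioi (0:ℝ), g ^ a * Real.log g ^ b * Real.exp (-g)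

lemma M_int (a b : ℕ) :
    IntegrableOn (fun g : ℝ => g ^ a * Real.log g ^ b * Real.exp (-g)) (Ioi 0) := by
  have h := E_conv b (a+1) (by simp; positivity)
  rw [MellinConvergent] at h
  have h2 := h.re
  refine h2.congr ?_
  filter_upwards with t
  simp only [E, add_sub_cancel_right, Complex.cpow_natCast, smul_eq_mul, ← Complex.ofReal_pow,
    ← Complex.ofReal_mul]
  rw [← mul_assoc]
  exact RCLike.ofReal_re (K := ℂ) _

lemma M_mellin (a b : ℕ) : mellin (E b) (a+1) = (M a b : ℂ) := by
  rw [M, mellin, ← integral_complex_ofReal]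
  congr 1; funext t
  simp only [E, add_sub_cancel_right, Complex.cpow_natCast, smul_eq_mul]
  push_cast; ring

lemma ev (s : ℂ) (hs : 0 < s.re) : ∀ᶠ z in 𝓝 s, 0 < z.re :=
  (isOpen_lt continuous_const Complex.continuous_re).mem_nhds hs

lemma rec0 (s : ℂ) (hs : 0 < s.re) : mellin (E 0) (s+1) = s * mellin (E 0) s := by
  rw [mellin_E0 _ hs, mellin_E0 _ (by simp; linarith), Complex.Gamma_add_one]
  rintro rfl; simp at hs

lemma rec1 (s : ℂ) (hs : 0 < s.re) :
    mellin (E 1) (s+1) = mellin (E 0) s + s * mellin (E 1) s := by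
  have h1 : HasDerivAt (fun z => mellin (E 0) (z+1)) (mellin (E 1) (s+1)) s :=
    (E_deriv 0 (s+1) (by simp; linarith)).comp_add_const s 1
  have h2 := (hasDerivAt_id s).mul (E_deriv 0 s hs)
  have h3 : (fun z => mellin (E 0) (z+1)) =ᶠ[𝓝 s] (id * mellin (E 0)) := by
    filter_upwards [ev s hs] with z hz
    simp [rec0 z hz]
  have := h1.unique (h2.congr_of_eventuallyEq h3)
  simpa using this

lemma rec2 (s : ℂ) (hs : 0 < s.re) :
    mellin (E 2) (s+1) = 2 * mellin (E 1) s + s * mellin (E 2) s := by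
  have h1 : HasDerivAt (fun z => mellin (E 1) (z+1)) (mellin (E 2) (s+1)) s :=
    (E_deriv 1 (s+1) (by simp; linarith)).comp_add_const s 1
  have h2 := (E_deriv 0 s hs).add ((hasDerivAt_id s).mul (E_deriv 1 s hs))
  have h3 : (fun z => mellin (E 1) (z+1)) =ᶠ[𝓝 s] (mellin (E 0) + id * mellin (E 1)) := by
    filter_upwards [ev s hs] with z hz
    simp [rec1 z hz]
  have := h1.unique (h2.congr_of_eventuallyEq h3)
  simp at this
  rw [this]; ring

lemma M_zero (a : ℕ) : M a 0 = a.factorial := by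
  have h := M_mellin a 0
  rw [mellin_E0 _ (by simp; positivity), Complex.Gamma_nat_eq_factorial] at h
  exact_mod_cast h.symm

lemma M_one_succ (a : ℕ) : M (a+1) 1 = M a 0 + (a+1) * M a 1 := by
  have h := rec1 (a+1) (by simp; positivity)
  have h' := M_mellin (a+1) 1
  push_cast at h'
  rw [h', M_mellin, M_mellin] at h
  exact_mod_cast h

lemma M_two_succ (a : ℕ) : M (a+1) 2 = 2 * M a 1 + (a+1) * M a 2 := by
  have h := rec2 (a+1) (by simp; positivity)
  have h' := M_mellin (a+1) 2
  push_cast at h'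
  rw [h', M_mellin, M_mellin] at h
  exact_mod_cast h

/-- reflection -/
lemma refl_formula (z : ℂ) (h1 : -1 < z.re) (h2 : z.re < 1) :
    mellin (E 0) (1+z) * mellin (E 0) (1-z) * Complex.sin (Real.pi * z) = Real.pi * z := by
  rw [mellin_E0 _ (by simp; linarith), mellin_E0 _ (by simp; linarith)]
  by_cases hz : z = 0
  · simp [hz]
  rw [add_comm, Complex.Gamma_add_one _ hz, mul_assoc z, Complex.Gamma_mul_Gamma_one_sub]
  have : Complex.sin (Real.pi * z) ≠ 0 := by
    intro h
    rw [Complex.sin_eq_zero_iff] at h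
    obtain ⟨k, hk⟩ := h
    have hp : (Real.pi : ℂ) ≠ 0 := by exact_mod_cast Real.pi_ne_zero
    have hzk : z = k := by
      apply mul_left_cancel₀ hp; rw [hk]; ring
    subst hzk
    simp at h1 h2 hz
    have : (-1:ℤ) < k := by exact_mod_cast h1
    have : k < (1:ℤ) := by exact_mod_cast h2
    omega
  rw [mul_assoc, div_mul_cancel₀ _ this, mul_comm]

lemma M_zero_two : M 0 2 = (M 0 1)^2 + Real.pi^2/6 := by
  -- abbreviations
  set G : ℕ → ℂ → ℂ := fun b => mellin (E b) with hG
  set p : ℂ := (Real.pi : ℂ) with hp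
  have hpne : p ≠ 0 := by rw [hp]; exact_mod_cast Real.pi_ne_zero
  have dp (b : ℕ) (z : ℂ) (h : -1 < z.re) : HasDerivAt (fun z => G b (1+z)) (G (b+1) (1+z)) z :=
    (E_deriv b (1+z) (by simp; linarith)).comp_const_add 1 z
  have dm (b : ℕ) (z : ℂ) (h : z.re < 1) : HasDerivAt (fun z => G b (1-z)) (-G (b+1) (1-z)) z :=
    (E_deriv b (1-z) (by simp; linarith)).comp_const_sub 1 z
  have dS (z : ℂ) : HasDerivAt (fun z => Complex.sin (p*z)) (Complex.cos (p*z) * p) z := by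
    simpa using ((hasDerivAt_id z).const_mul p).csin
  have dC (z : ℂ) : HasDerivAt (fun z => Complex.cos (p*z)) (-Complex.sin (p*z) * p) z := by
    simpa using ((hasDerivAt_id z).const_mul p).ccos
  have evs : ∀ z : ℂ, -1 < z.re → z.re < 1 → ∀ᶠ w in 𝓝 z, -1 < w.re ∧ w.re < 1 := by
    intro z h1 h2
    exact ((isOpen_lt continuous_const Complex.continuous_re).inter
      (isOpen_lt Complex.continuous_re continuous_const)).mem_nhds ⟨h1, h2⟩
  have id1 : ∀ z : ℂ, -1 < z.re → z.re < 1 →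
      (G 1 (1+z) * G 0 (1-z) - G 0 (1+z) * G 1 (1-z)) * Complex.sin (p*z)
        + G 0 (1+z) * G 0 (1-z) * (Complex.cos (p*z) * p) = p := by
    intro z h1 h2
    have hd := (((dp 0 z h1).mul (dm 0 z h2)).mul (dS z))
    have hd2 : HasDerivAt (fun z => p * z) p z := by simpa using (hasDerivAt_id z).const_mul p
    have he := hd2.unique (hd.congr_of_eventuallyEq (by
      filter_upwards [evs z h1 h2] with w hw
      simpa using (refl_formula w hw.1 hw.2).symm))
    simp at he
    linear_combination -he
  have id2 : ∀ z : ℂ, -1 < z.re → z.re < 1 →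
      (G 2 (1+z) * G 0 (1-z) - 2 * (G 1 (1+z) * G 1 (1-z)) + G 0 (1+z) * G 2 (1-z)) * Complex.sin (p*z)
        + 2 * (G 1 (1+z) * G 0 (1-z) - G 0 (1+z) * G 1 (1-z)) * (Complex.cos (p*z) * p)
        - G 0 (1+z) * G 0 (1-z) * (Complex.sin (p*z) * p^2) = 0 := by
    intro z h1 h2
    have hd := ((((dp 1 z h1).mul (dm 0 z h2)).sub ((dp 0 z h1).mul (dm 1 z h2))).mul (dS z)).add
      (((dp 0 z h1).mul (dm 0 z h2)).mul ((dC z).mul_const p))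
    have he := (hasDerivAt_const z p).unique (hd.congr_of_eventuallyEq (by
      filter_upwards [evs z h1 h2] with w hw
      simpa using (id1 w hw.1 hw.2).symm))
    simp at he
    linear_combination -he
  have id3 : 3 * p * (2 * G 2 1 * G 0 1 - 2 * (G 1 1)^2) - G 0 1 * G 0 1 * p^3 = 0 := by
    have h1 : -1 < (0:ℂ).re := by simp
    have h2 : (0:ℂ).re < 1 := by simp
    have hd := (((((dp 2 0 h1).mul (dm 0 0 h2)).sub (((dp 1 0 h1).mul (dm 1 0 h2)).const_mul 2)).add
      ((dp 0 0 h1).mul (dm 2 0 h2))).mul (dS 0)).add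
      (((((dp 1 0 h1).mul (dm 0 0 h2)).sub ((dp 0 0 h1).mul (dm 1 0 h2))).const_mul 2).mul ((dC 0).mul_const p))
      |>.sub (((dp 0 0 h1).mul (dm 0 0 h2)).mul ((dS 0).mul_const (p^2)))
    have he := (hasDerivAt_const 0 (0:ℂ)).unique (hd.congr_of_eventuallyEq (by
      filter_upwards [evs 0 h1 h2] with w hw
      simpa using (id2 w hw.1 hw.2).symm))
    simp at he
    linear_combination -he
  have e0 : G 0 1 = 1 := by simp [hG, mellin_E0]
  have e1 : G 1 1 = M 0 1 := by simpa using M_mellin 0 1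
  have e2 : G 2 1 = M 0 2 := by simpa using M_mellin 0 2
  rw [e0, e1, e2] at id3
  have : (M 0 2 : ℂ) = (M 0 1)^2 + p^2/6 := by
    apply mul_left_cancel₀ hpne
    linear_combination id3 / 6
  rw [hp] at this
  exact_mod_cast this

noncomputable def W (a b : ℕ) (β τ : ℝ) : ℝ → ℝ :=
  (Ioi (0:ℝ)).indicator
    (fun y => y ^ (-τ-1) * (y ^ (-τ)) ^ a * Real.log y ^ b * Real.exp (-(β * y ^ (-τ))))

lemma W_meas (a b : ℕ) (β τ : ℝ) : Measurable (W a b β τ) := by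
  apply Measurable.indicator _ measurableSet_Ioi
  fun_prop

lemma W_split (a b : ℕ) (β τ y : ℝ) : W a b β τ y = W a 0 β τ y * Real.log y ^ b := by
  unfold W indicator
  split_ifs <;> ring

lemma W_nonneg (a : ℕ) (β τ y : ℝ) : 0 ≤ W a 0 β τ y := by
  unfold W
  apply indicator_nonneg
  intro y hy
  have hy : 0 < y := hy
  positivity

lemma W_zero (a b : ℕ) (β τ y : ℝ) (hy : y ≤ 0) : W a b β τ y = 0 := by
  unfold W
  apply indicator_of_notMem
  simpa using hy

lemma lin3 {α : Type*} [MeasurableSpace α] {μ : Measure α} (f g h : α → ℝ) (c0 c1 c2 : ℝ)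
    (hf : Integrable f μ) (hg : Integrable g μ) (hh : Integrable h μ) :
    ∫ x, (c0 * f x + c1 * g x + c2 * h x) ∂μ =
      c0 * ∫ x, f x ∂μ + c1 * ∫ x, g x ∂μ + c2 * ∫ x, h x ∂μ := by
  have i0 := hf.const_mul c0
  have i1 := hg.const_mul c1
  have i2 := hh.const_mul c2
  have i01 : Integrable (fun x => c0 * f x + c1 * g x) μ := i0.add i1
  rw [integral_add i01 i2, integral_add i0 i1,
      integral_const_mul, integral_const_mul, integral_const_mul]

lemma scale_poly (a : ℕ) (β : ℝ) (hβ : 0 < β) (c0 c1 c2 : ℝ) (f : ℝ → ℝ)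
    (hf : ∀ z, 0 < z → f z = z ^ a * (c0 + c1 * Real.log (β * z) + c2 * Real.log (β * z) ^ 2) *
      Real.exp (-(β * z))) :
    IntegrableOn f (Ioi 0) ∧ ∫ z in Ioi (0:ℝ), f z =
      (c0 * M a 0 + c1 * M a 1 + c2 * M a 2) / β ^ (a+1) := by
  set g : ℝ → ℝ := fun g => (β^a)⁻¹ * (c0 * (g ^ a * Real.log g ^ 0 * Real.exp (-g)) +
    c1 * (g ^ a * Real.log g ^ 1 * Real.exp (-g)) + c2 * (g ^ a * Real.log g ^ 2 * Real.exp (-g)))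
    with hg
  have hfg : EqOn f (fun z => g (β * z)) (Ioi 0) := by
    intro z hz
    rw [hf z hz]
    simp only [hg, mul_pow]
    field_simp
  have i0 := (M_int a 0).const_mul c0
  have i1 := (M_int a 1).const_mul c1
  have i2 := (M_int a 2).const_mul c2
  have ig : IntegrableOn g (Ioi 0) := ((i0.add i1).add i2).const_mul _
  constructor
  · rw [integrableOn_congr_fun hfg measurableSet_Ioi, integrableOn_Ioi_comp_mul_left_iff g 0 hβ]
    simpa using ig
  · rw [setIntegral_congr_fun measurableSet_Ioi hfg, integral_comp_mul_left_Ioi g 0 hβ]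
    rw [mul_zero, hg, integral_const_mul, lin3 _ _ _ _ _ _ (M_int a 0) (M_int a 1) (M_int a 2)]
    change β⁻¹ * ((β^a)⁻¹ * (c0 * M a 0 + c1 * M a 1 + c2 * M a 2)) = _
    rw [pow_succ]
    field_simp

lemma W_poly (a b : ℕ) (β τ : ℝ) (hβ : 0 < β) (hτ : 0 < τ) (c0 c1 c2 : ℝ)
    (hb : ∀ l : ℝ, ((Real.log β - l) / τ) ^ b = c0 + c1 * l + c2 * l ^ 2) :
    Integrable (W a b β τ) ∧ ∫ y, W a b β τ y =
      (c0 * M a 0 + c1 * M a 1 + c2 * M a 2) / (τ * β ^ (a+1)) := by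
  set f : ℝ → ℝ := fun z => z ^ a * (-Real.log z / τ) ^ b * Real.exp (-(β * z)) with hf
  obtain ⟨h1, h2⟩ := scale_poly a β hβ c0 c1 c2 f (by
    intro z hz
    simp only [hf]
    rw [← hb, Real.log_mul hβ.ne' hz.ne']
    congr 3; ring)
  have hp : -τ ≠ 0 := by linarith
  have e : EqOn (fun y : ℝ => y ^ (-τ-1) * (y ^ (-τ)) ^ a * Real.log y ^ b * Real.exp (-(β * y ^ (-τ))))
      (fun y => τ⁻¹ * ((|-τ| * y ^ (-τ-1)) • f (y ^ (-τ)))) (Ioi 0) := by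
    intro y hy
    have hy : 0 < y := hy
    simp only [hf, abs_neg, abs_of_pos hτ, smul_eq_mul, Real.log_rpow hy]
    rw [show -(-τ * Real.log y) / τ = Real.log y by field_simp]
    field_simp
  unfold W
  rw [integrable_indicator_iff measurableSet_Ioi, integral_indicator measurableSet_Ioi,
    integrableOn_congr_fun e measurableSet_Ioi, setIntegral_congr_fun measurableSet_Ioi e]
  constructor
  · exact ((integrableOn_Ioi_comp_rpow_iff f hp).2 h1).const_mul _
  · rw [integral_const_mul, integral_comp_rpow_Ioi f hp, h2]
    field_simp

lemma W0 (a : ℕ) (β τ : ℝ) (hβ : 0 < β) (hτ : 0 < τ) :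
    Integrable (W a 0 β τ) ∧ ∫ y, W a 0 β τ y = a.factorial / (τ * β ^ (a+1)) := by
  have := W_poly a 0 β τ hβ hτ 1 0 0 (by intro l; simp)
  simpa [M_zero] using this

/-- normalised log moments -/
noncomputable def rho (a b : ℕ) (β τ : ℝ) : ℝ :=
  if b = 0 then 1 else if b = 1 then (Real.log β - M a 1 / a.factorial) / τ
  else (Real.log β ^ 2 - 2 * Real.log β * (M a 1 / a.factorial) + M a 2 / a.factorial) / τ ^ 2

lemma W_all (a b : ℕ) (hb : b ≤ 2) (β τ : ℝ) (hβ : 0 < β) (hτ : 0 < τ) :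
    Integrable (W a b β τ) ∧
      ∫ y, W a b β τ y = a.factorial / (τ * β ^ (a+1)) * rho a b β τ := by
  have hfac : (a.factorial : ℝ) ≠ 0 := by exact_mod_cast a.factorial_ne_zero
  interval_cases b
  · simpa [rho] using W0 a β τ hβ hτ
  · have := W_poly a 1 β τ hβ hτ (Real.log β / τ) (-1/τ) 0 (by intro l; ring)
    refine ⟨this.1, this.2.trans ?_⟩
    simp only [rho, M_zero]
    norm_num
    field_simp
    ring
  · have := W_poly a 2 β τ hβ hτ (Real.log β ^ 2 / τ ^ 2) (-2 * Real.log β /τ ^ 2) (1 / τ ^ 2)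
      (by intro l; ring)
    refine ⟨this.1, this.2.trans ?_⟩
    simp only [rho, M_zero]
    norm_num
    field_simp
    ring

lemma prod_one {K : ℕ} (φ : Fin K → ℕ → ℝ) (h0 : ∀ j, φ j 0 = 1) (i : Fin K) :
    ∏ j, φ j (if j = i then 2 else 0) = φ i 2 := by
  rw [Finset.prod_eq_single i]
  · simp
  · intro j _ hj; simp [hj, h0]
  · simp

lemma prod_two {K : ℕ} (φ : Fin K → ℕ → ℝ) (h0 : ∀ j, φ j 0 = 1) (i k : Fin K) (hik : i ≠ k) :
    ∏ j, φ j (if j = i then 1 else if j = k then 1 else 0) = φ i 1 * φ k 1 := by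
  rw [Finset.prod_eq_mul i k hik]
  · simp [hik.symm]
  · intro j _ hj; simp [hj.1, hj.2, h0]
  · simp
  · simp

noncomputable def Q (K : ℕ) (a : Fin K → ℕ) (β : Fin K → ℝ) (τ : ℝ) (i k : Fin K)
    (y : Fin K → ℝ) : ℝ :=
  (Real.log (y i) - Real.log (y k)) ^ 2 * ∏ j, W (a j) 0 (β j) τ (y j)

lemma Q_integral (K : ℕ) (a : Fin K → ℕ) (β : Fin K → ℝ) (τ : ℝ) (hβ : ∀ j, 0 < β j) (hτ : 0 < τ)
    (i k : Fin K) (hik : i ≠ k) :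
    ∫ y, Q K a β τ i k y = (∏ j, ((a j).factorial / (τ * β j ^ (a j + 1)) : ℝ)) *
      (rho (a i) 2 (β i) τ - 2 * (rho (a i) 1 (β i) τ * rho (a k) 1 (β k) τ)
        + rho (a k) 2 (β k) τ) := by
  have I (b : Fin K → ℕ) (hb : ∀ j, b j ≤ 2) :
      Integrable (fun y : Fin K → ℝ => ∏ j, W (a j) (b j) (β j) τ (y j)) ∧
      ∫ y : Fin K → ℝ, ∏ j, W (a j) (b j) (β j) τ (y j) =
        (∏ j, ((a j).factorial / (τ * β j ^ (a j + 1)) : ℝ)) * ∏ j, rho (a j) (b j) (β j) τ := by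
    constructor
    · exact Integrable.fintype_prod (f := fun j => W (a j) (b j) (β j) τ)
        (fun j => (W_all (a j) (b j) (hb j) (β j) τ (hβ j) hτ).1)
    · rw [integral_fintype_prod_volume_eq_prod (fun j => W (a j) (b j) (β j) τ),
        ← Finset.prod_mul_distrib]
      exact Finset.prod_congr rfl fun j _ => (W_all (a j) (b j) (hb j) (β j) τ (hβ j) hτ).2
  have S (b : Fin K → ℕ) (y : Fin K → ℝ) : ∏ j, W (a j) (b j) (β j) τ (y j) =
      (∏ j, W (a j) 0 (β j) τ (y j)) * ∏ j, Real.log (y j) ^ (b j) := by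
    rw [← Finset.prod_mul_distrib]
    exact Finset.prod_congr rfl fun j _ => W_split _ _ _ _ _
  obtain ⟨A1, A2⟩ := I (fun j => if j = i then 2 else 0) (by intro j; split_ifs <;> simp)
  obtain ⟨B1, B2⟩ := I (fun j => if j = i then 1 else if j = k then 1 else 0)
    (by intro j; split_ifs <;> simp)
  obtain ⟨C1, C2⟩ := I (fun j => if j = k then 2 else 0) (by intro j; split_ifs <;> simp)
  have hr : ∀ j, rho (a j) 0 (β j) τ = 1 := fun j => by simp [rho]
  rw [prod_one (fun j b => rho (a j) b (β j) τ) hr] at A2 C2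
  rw [prod_two (fun j b => rho (a j) b (β j) τ) hr i k hik] at B2
  have e : Q K a β τ i k = fun y =>
      1 * (∏ j, W (a j) (if j = i then 2 else 0) (β j) τ (y j)) +
      (-2) * (∏ j, W (a j) (if j = i then 1 else if j = k then 1 else 0) (β j) τ (y j)) +
      1 * ∏ j, W (a j) (if j = k then 2 else 0) (β j) τ (y j) := by
    funext y
    rw [S (fun j => if j = i then 2 else 0), S (fun j => if j = k then 2 else 0),
      S (fun j => if j = i then 1 else if j = k then 1 else 0),
      prod_one (fun j b => Real.log (y j) ^ b) (by simp),
      prod_one (fun j b => Real.log (y j) ^ b) (by simp),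
      prod_two (fun j b => Real.log (y j) ^ b) (by simp) i k hik, Q]
    ring
  rw [e, lin3 _ _ _ _ _ _ A1 B1 C1, A2, B2, C2]
  ring

lemma Q_nonneg (K : ℕ) (a : Fin K → ℕ) (β : Fin K → ℝ) (τ : ℝ) (i k : Fin K) (y : Fin K → ℝ) :
    0 ≤ Q K a β τ i k y :=
  mul_nonneg (sq_nonneg _) (Finset.prod_nonneg fun _ _ => W_nonneg _ _ _ _)

lemma Q_meas (K : ℕ) (a : Fin K → ℕ) (β : Fin K → ℝ) (τ : ℝ) (i k : Fin K) :
    Measurable (Q K a β τ i k) := by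
  unfold Q
  apply Measurable.mul
  · fun_prop
  · exact Finset.measurable_prod _ fun j _ => (W_meas _ _ _ _).comp (measurable_pi_apply j)

lemma Q_zero (K : ℕ) (a : Fin K → ℕ) (β : Fin K → ℝ) (τ : ℝ) (i k : Fin K) (y : Fin K → ℝ)
    (h : ∃ j, y j ≤ 0) : Q K a β τ i k y = 0 := by
  obtain ⟨j, hj⟩ := h
  unfold Q
  rw [Finset.prod_eq_zero (Finset.mem_univ j) (W_zero _ _ _ _ _ hj), mul_zero]
end ISaux
namespace ISaux
open Set Filter Topology

lemma fill_eq (N : ℕ) (u : Fin N → ℝ) :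
    fillMap (N+1) u = (Fin.last N).insertNth (α := fun _ => ℝ) (1 - ∑ j, u j) u := by
  funext j
  refine Fin.lastCases ?_ (fun j => ?_) j
  · simp [fillMap]
  · simp [fillMap]

lemma fill_meas (N : ℕ) : Measurable (fillMap (N+1)) := by
  apply measurable_pi_lambda
  intro j
  unfold fillMap
  split_ifs with h
  · exact measurable_pi_apply _
  · fun_prop

lemma fill_last (N : ℕ) (u : Fin N → ℝ) : fillMap (N+1) u (Fin.last N) = 1 - ∑ j, u j := by
  simp [fillMap]

lemma fill_cast (N : ℕ) (u : Fin N → ℝ) (j : Fin N) : fillMap (N+1) u j.castSucc = u j := by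
  simp [fillMap]

lemma polar (N : ℕ) (G : (Fin (N+1) → ℝ) → ENNReal) (hG : Measurable G)
    (h0 : ∀ y, (∃ j, y j ≤ 0) → G y = 0) :
    ∫⁻ y, G y = ∫⁻ x, (∫⁻ s in Ioi (0:ℝ), ENNReal.ofReal (s^N) * G (s • x))
      ∂(simplexMeasure (N+1)) := by
  set T : Set (Fin N → ℝ) := {u : Fin N → ℝ | (∀ j, 0 ≤ u j) ∧ ∑ j, u j ≤ 1} with hT
  have hTm : MeasurableSet T := by
    apply MeasurableSet.inter
    · have : {u : Fin N → ℝ | ∀ j, 0 ≤ u j} = ⋂ j, {u | 0 ≤ u j} := by ext; simp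
      change MeasurableSet {u : Fin N → ℝ | ∀ j, 0 ≤ u j}
      rw [this]
      exact MeasurableSet.iInter fun j => measurableSet_le measurable_const (measurable_pi_apply j)
    · change MeasurableSet {u : Fin N → ℝ | ∑ j, u j ≤ 1}
      exact measurableSet_le (by fun_prop) measurable_const
  have hm2 : Measurable (fun q : (Fin (N+1) → ℝ) × ℝ =>
      ENNReal.ofReal (q.2^N) * G (q.2 • q.1)) := by
    apply Measurable.mul
    · fun_prop
    · exact hG.comp (by fun_prop)
  have hm : Measurable (fun x : Fin (N+1) → ℝ =>
      ∫⁻ s in Ioi (0:ℝ), ENNReal.ofReal (s^N) * G (s • x)) := hm2.lintegral_prod_right'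
  have R : ∫⁻ x, (∫⁻ s in Ioi (0:ℝ), ENNReal.ofReal (s^N) * G (s • x))
      ∂(simplexMeasure (N+1)) =
      ∫⁻ s in Ioi (0:ℝ), ∫⁻ u : Fin N → ℝ, ENNReal.ofReal (s^N) * G (s • fillMap (N+1) u) := by
    unfold simplexMeasure
    rw [lintegral_map hm (fill_meas N)]
    change ∫⁻ u in T, _ = _
    rw [← lintegral_indicator hTm, ← lintegral_lintegral_swap]
    · congr 1
      funext u
      by_cases hu : u ∈ T
      · rw [indicator_of_mem hu]
      · rw [indicator_of_notMem hu]
        symm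
        apply (setLIntegral_congr_fun measurableSet_Ioi (g := fun _ => 0) ?_).trans (by simp)
        intro s hs
        have hs : 0 < s := hs
        have : G (s • fillMap (N+1) u) = 0 := by
          apply h0
          by_contra! hc
          apply hu
          have hc' : ∀ j, 0 < fillMap (N+1) u j := fun j => by
            have := hc j
            simp only [Pi.smul_apply, smul_eq_mul] at this
            exact (mul_pos_iff_of_pos_left hs).1 this
          refine ⟨fun j => ?_, ?_⟩
          · have := hc' j.castSucc
            rw [fill_cast] at this; exact this.le
          · have := hc' (Fin.last N)
            rw [fill_last] at this; linarith
        simp [this]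
    · apply Measurable.aemeasurable
      refine hm2.comp (f := fun q : (Fin N → ℝ) × ℝ => (fillMap (N+1) q.1, q.2)) ?_
      exact ((fill_meas N).comp measurable_fst).prodMk measurable_snd
  rw [R]
  have mp := (volume_preserving_piFinSuccAbove (fun _ : Fin (N+1) => ℝ) (Fin.last N)).symm
  rw [← mp.lintegral_comp hG]
  have hGs : Measurable (fun q : ℝ × (Fin N → ℝ) =>
      G ((MeasurableEquiv.piFinSuccAbove (fun _ : Fin (N+1) => ℝ) (Fin.last N)).symm q)) :=
    hG.comp (MeasurableEquiv.piFinSuccAbove (fun _ : Fin (N+1) => ℝ) (Fin.last N)).symm.measurable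
  have hps := lintegral_prod_symm (μ := (volume : Measure ℝ)) (ν := (volume : Measure (Fin N → ℝ)))
    (fun q : ℝ × (Fin N → ℝ) =>
      G ((MeasurableEquiv.piFinSuccAbove (fun _ : Fin (N+1) => ℝ) (Fin.last N)).symm q))
    hGs.aemeasurable
  rw [Measure.volume_eq_prod, hps]
  have hm3 : Measurable (fun q : (Fin N → ℝ) × ℝ =>
      G ((Fin.last N).insertNth (α := fun _ => ℝ) (q.2 - ∑ j, q.1 j) q.1)) := by
    have : Measurable (fun q : (Fin N → ℝ) × ℝ => ((q.2 - ∑ j, q.1 j, q.1) : ℝ × (Fin N → ℝ))) := by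
      fun_prop
    exact hG.comp ((MeasurableEquiv.piFinSuccAbove (fun _ : Fin (N+1) => ℝ) (Fin.last N)).symm.measurable.comp this)
  have L1 : ∀ v : Fin N → ℝ, ∫⁻ t : ℝ, G ((MeasurableEquiv.piFinSuccAbove (fun _ : Fin (N+1) => ℝ) (Fin.last N)).symm (t, v))
      = ∫⁻ s : ℝ, G ((Fin.last N).insertNth (α := fun _ => ℝ) (s - ∑ j, v j) v) := by
    intro v
    exact (lintegral_sub_right_eq_self (fun t => G ((Fin.last N).insertNth (α := fun _ => ℝ) t v)) (∑ j, v j)).symm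
  rw [lintegral_congr L1, lintegral_lintegral_swap hm3.aemeasurable]
  rw [← lintegral_indicator measurableSet_Ioi]
  congr 1
  funext s
  by_cases hs : s ∈ Ioi (0:ℝ)
  · rw [indicator_of_mem hs]
    have hs : 0 < s := hs
    have hms : Measurable (fun v : Fin N → ℝ => G ((Fin.last N).insertNth (α := fun _ => ℝ) (s - ∑ j, v j) v)) :=
      hm3.comp (measurable_id.prodMk measurable_const)
    have key := Measure.map_addHaar_smul (volume : Measure (Fin N → ℝ)) hs.ne'
    have k2 := congrArg (fun μ => ∫⁻ v, G ((Fin.last N).insertNth (α := fun _ => ℝ) (s - ∑ j, v j) v) ∂μ) key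
    beta_reduce at k2
    rw [lintegral_map hms (by fun_prop), lintegral_smul_measure] at k2
    have e1 : ∀ u : Fin N → ℝ, G ((Fin.last N).insertNth (α := fun _ => ℝ) (s - ∑ j, (s • u) j) (s • u)) = G (s • fillMap (N+1) u) := by
      intro u
      congr 1
      funext j
      refine Fin.lastCases ?_ (fun j => ?_) j
      · simp [fill_last, mul_sub, Finset.mul_sum]
      · simp [fill_cast]
    simp only [e1] at k2
    rw [lintegral_const_mul', k2, smul_eq_mul, ← mul_assoc, ← ENNReal.ofReal_mul (by positivity)]
    · have : s ^ N * |(s ^ Module.finrank ℝ (Fin N → ℝ))⁻¹| = 1 := by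
        rw [abs_of_pos (by positivity)]
        simp
        field_simp
      rw [this]; simp
    · exact ENNReal.ofReal_ne_top
  · rw [indicator_of_notMem hs]
    apply (lintegral_congr (g := fun _ => 0) ?_).trans (by simp)
    intro v
    apply h0
    by_contra! hc
    apply hs
    have h1 := hc (Fin.last N)
    have h2 : ∀ j : Fin N, 0 < v j := fun j => by simpa using hc j.castSucc
    simp at h1
    have : 0 ≤ ∑ j, v j := Finset.sum_nonneg fun j _ => (h2 j).le
    show 0 < s
    linarith
end ISaux

namespace ISaux
open Set Filter Topology

/-- the integrand of the statement -/
noncomputable def Fi (K : ℕ) (β : Fin K → ℝ) (τ : ℝ) (i k m n : Fin K) (x : Fin K → ℝ) : ℝ :=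
  hfun K β τ x * (Real.log (x i) - Real.log (x k)) ^ 2 /
          (kfun K β τ x ^ 2 * x m ^ τ * x n ^ τ)

lemma Fi_meas (K : ℕ) (β : Fin K → ℝ) (τ : ℝ) (i k m n : Fin K) :
    Measurable (Fi K β τ i k m n) := by
  unfold Fi hfun kfun
  fun_prop

lemma Fi_nonneg (K : ℕ) (β : Fin K → ℝ) (τ : ℝ) (hβ : ∀ j, 0 < β j) (i k m n : Fin K)
    (x : Fin K → ℝ) (hx : ∀ j, 0 ≤ x j) : 0 ≤ Fi K β τ i k m n x := by
  have h1 (r : ℝ) (j : Fin K) : 0 ≤ x j ^ r := Real.rpow_nonneg (hx j) r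
  have h2 : 0 ≤ ∑ j, β j / x j ^ τ :=
    Finset.sum_nonneg fun j _ => div_nonneg (hβ j).le (h1 _ _)
  unfold Fi hfun kfun
  apply div_nonneg
  · exact mul_nonneg (mul_nonneg (Real.rpow_nonneg h2 _) (Finset.prod_nonneg fun j _ => h1 _ _))
      (sq_nonneg _)
  · exact mul_nonneg (mul_nonneg (sq_nonneg _) (h1 _ _)) (h1 _ _)

lemma simplex_nonneg (N : ℕ) : ∀ᵐ x ∂(simplexMeasure (N+1)), ∀ j, 0 ≤ x j := by
  unfold simplexMeasure
  have hs : MeasurableSet {x : Fin (N+1) → ℝ | ∀ j, 0 ≤ x j} := by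
    have : {u : Fin (N+1) → ℝ | ∀ j, 0 ≤ u j} = ⋂ j, {u | 0 ≤ u j} := by ext; simp
    rw [this]
    exact MeasurableSet.iInter fun j => measurableSet_le measurable_const (measurable_pi_apply j)
  rw [ae_map_iff (fill_meas N).aemeasurable hs]
  refine ae_restrict_of_forall_mem ?_ ?_
  · apply MeasurableSet.inter
    · have : {u : Fin N → ℝ | ∀ j, 0 ≤ u j} = ⋂ j, {u | 0 ≤ u j} := by ext; simp
      change MeasurableSet {u : Fin N → ℝ | ∀ j, 0 ≤ u j}
      rw [this]
      exact MeasurableSet.iInter fun j => measurableSet_le measurable_const (measurable_pi_apply j)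
    · change MeasurableSet {u : Fin N → ℝ | ∑ j, u j ≤ 1}
      exact measurableSet_le (by fun_prop) measurable_const
  · intro u hu j
    refine Fin.lastCases ?_ (fun j => ?_) j
    · have h : ∑ j : Fin N, u j ≤ 1 := hu.2
      have := fill_last N u
      rw [this]; linarith
    · have := fill_cast N u j
      rw [this]; exact hu.1 j

/-- exponents -/
def ex {K : ℕ} (m n : Fin K) (j : Fin K) : ℕ := (if j = m then 1 else 0) + (if j = n then 1 else 0)

lemma prod_ex {K : ℕ} (m n : Fin K) (f : Fin K → ℝ) : ∏ j, f j ^ (ex m n j) = f m * f n := by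
  unfold ex
  simp only [pow_add]
  rw [Finset.prod_mul_distrib]
  congr 1 <;> simp [pow_ite]

lemma radial (N : ℕ) (β : Fin (N+1) → ℝ) (τ : ℝ) (hβ : ∀ j, 0 < β j) (hτ : 0 < τ)
    (i k m n : Fin (N+1)) (x : Fin (N+1) → ℝ) (hx : ∀ j, 0 ≤ x j) :
    ∫⁻ s in Ioi (0:ℝ), ENNReal.ofReal (s^N) * ENNReal.ofReal (Q (N+1) (ex m n) β τ i k (s • x)) =
      ENNReal.ofReal ((N+2).factorial / τ) * ENNReal.ofReal (Fi (N+1) β τ i k m n x) := by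
  by_cases h : ∃ j, x j = 0
  · obtain ⟨j, hj⟩ := h
    have hF : Fi (N+1) β τ i k m n x = 0 := by
      unfold Fi hfun
      rw [Finset.prod_eq_zero (Finset.mem_univ j)]
      · simp
      · rw [hj, Real.zero_rpow]; linarith
    have hQ : ∀ s : ℝ, Q (N+1) (ex m n) β τ i k (s • x) = 0 := fun s =>
      Q_zero _ _ _ _ _ _ _ ⟨j, by simp [hj]⟩
    simp [hF, hQ]
  have hx : ∀ j, 0 < x j := fun j => lt_of_le_of_ne (hx j) (fun h' => h ⟨j, h'.symm⟩)
  set κ := kfun (N+1) β τ x with hκ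
  have hκpos : 0 < κ := Finset.sum_pos (fun j _ => div_pos (hβ j) (Real.rpow_pos_of_pos (hx j) _))
    ⟨0, Finset.mem_univ _⟩
  set P : ℝ := (Real.log (x i) - Real.log (x k)) ^ 2 * (∏ j, x j ^ (-τ-1)) *
    (x m ^ (-τ) * x n ^ (-τ)) with hP
  have hP0 : 0 ≤ P := by
    have := fun j (r : ℝ) => (Real.rpow_pos_of_pos (hx j) r).le
    exact mul_nonneg (mul_nonneg (sq_nonneg _) (Finset.prod_nonneg fun j _ => this _ _))
      (mul_nonneg (this _ _) (this _ _))
  have key : ∀ s : ℝ, 0 < s → s ^ N * Q (N+1) (ex m n) β τ i k (s • x) = P * W (N+2) 0 κ τ s := by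
    intro s hs
    have hsx : ∀ j, 0 < s * x j := fun j => mul_pos hs (hx j)
    have e1 : ∏ j, W (ex m n j) 0 (β j) τ ((s • x) j) =
        ((s ^ (-τ-1)) ^ (N+1) * ∏ j, x j ^ (-τ-1)) * ((s ^ (-τ) * x m ^ (-τ)) * (s ^ (-τ) * x n ^ (-τ)))
          * Real.exp (-(κ * s ^ (-τ))) := by
      have : ∀ j, W (ex m n j) 0 (β j) τ ((s • x) j) =
          (s ^ (-τ-1) * x j ^ (-τ-1)) * (s ^ (-τ) * x j ^ (-τ)) ^ (ex m n j) *
            Real.exp (-(β j / x j ^ τ * s ^ (-τ))) := by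
        intro j
        unfold W
        rw [Pi.smul_apply, smul_eq_mul, indicator_of_mem (show s * x j ∈ Set.Ioi (0:ℝ) from hsx j),
          Real.mul_rpow hs.le (hx j).le, Real.mul_rpow hs.le (hx j).le, pow_zero, mul_one]
        congr 3
        rw [Real.rpow_neg (hx j).le]
        ring
      rw [Finset.prod_congr rfl fun j _ => this j, Finset.prod_mul_distrib,
        Finset.prod_mul_distrib, Finset.prod_mul_distrib, Finset.prod_const,
        prod_ex m n (fun j => s ^ (-τ) * x j ^ (-τ)), ← Real.exp_sum, Finset.sum_neg_distrib,
        ← Finset.sum_mul]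
      simp only [Finset.card_univ, Fintype.card_fin]
      rfl
    have e2 : s ^ (-τ-1) = s ^ (-τ) / s := by rw [Real.rpow_sub hs, Real.rpow_one]
    have e3 : Real.log ((s • x) i) - Real.log ((s • x) k) = Real.log (x i) - Real.log (x k) := by
      simp only [Pi.smul_apply, smul_eq_mul]
      rw [Real.log_mul hs.ne' (hx i).ne', Real.log_mul hs.ne' (hx k).ne']
      ring
    unfold Q
    rw [e1, e3, W, indicator_of_mem (show s ∈ Set.Ioi (0:ℝ) from hs), hP, e2]
    generalize s ^ (-τ) = σ
    generalize (∏ j, x j ^ (-τ-1)) = R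
    rw [div_pow, pow_succ s N]
    field_simp
    ring
  obtain ⟨w1, w2⟩ := W0 (N+2) κ τ hκpos hτ
  have e4 : ∫⁻ s in Ioi (0:ℝ), ENNReal.ofReal (s^N) *
      ENNReal.ofReal (Q (N+1) (ex m n) β τ i k (s • x)) =
      ∫⁻ s, ENNReal.ofReal (P * W (N+2) 0 κ τ s) := by
    rw [← lintegral_indicator measurableSet_Ioi]
    congr 1
    funext s
    by_cases hs : s ∈ Ioi (0:ℝ)
    · rw [indicator_of_mem hs, ← key s hs, ENNReal.ofReal_mul (pow_nonneg (le_of_lt hs) _)]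
    · rw [indicator_of_notMem hs, W_zero _ _ _ _ _ (by simpa using hs)]
      simp
  rw [e4, ← ofReal_integral_eq_lintegral_ofReal (w1.const_mul P)
    (Eventually.of_forall fun s => mul_nonneg hP0 (W_nonneg _ _ _ _)), integral_const_mul, w2,
    ← ENNReal.ofReal_mul (by positivity)]
  congr 1
  unfold Fi hfun
  rw [← hκ]
  change _ = _ * ((κ ^ (-((N+1 : ℕ) : ℝ)) * _) * _ / _)
  have e5 : ∏ j, x j ^ (-(τ+1)) = ∏ j, x j ^ (-τ-1) := by
    congr 1; funext j; congr 1; ring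
  rw [e5, hP, Real.rpow_neg hκpos.le, Real.rpow_natCast, Real.rpow_neg (hx m).le,
    Real.rpow_neg (hx n).le]
  have := (Real.rpow_pos_of_pos (hx m) τ).ne'
  have := (Real.rpow_pos_of_pos (hx n) τ).ne'
  have := hκpos.ne'
  generalize (∏ j, x j ^ (-τ-1)) = R
  field_simp
  ring

lemma transfer (N : ℕ) (β : Fin (N+1) → ℝ) (τ : ℝ) (hβ : ∀ j, 0 < β j) (hτ : 0 < τ)
    (i k m n : Fin (N+1)) :
    ∫ y, Q (N+1) (ex m n) β τ i k y =
      ((N+2).factorial / τ) * ∫ x, Fi (N+1) β τ i k m n x ∂(simplexMeasure (N+1)) := by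
  rw [integral_eq_lintegral_of_nonneg_ae (Eventually.of_forall fun y => Q_nonneg _ _ _ _ _ _ y)
    (Q_meas _ _ _ _ _ _).aestronglyMeasurable,
    integral_eq_lintegral_of_nonneg_ae ?_ (Fi_meas _ _ _ _ _ _ _).aestronglyMeasurable]
  · rw [polar N _ (Q_meas _ _ _ _ _ _).ennreal_ofReal
      (fun y hy => by rw [Q_zero _ _ _ _ _ _ _ hy, ENNReal.ofReal_zero])]
    have : ∀ᵐ x ∂(simplexMeasure (N+1)), ∫⁻ s in Ioi (0:ℝ), ENNReal.ofReal (s^N) *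
        ENNReal.ofReal (Q (N+1) (ex m n) β τ i k (s • x)) =
      ENNReal.ofReal ((N+2).factorial / τ) * ENNReal.ofReal (Fi (N+1) β τ i k m n x) := by
      filter_upwards [simplex_nonneg N] with x hx
      exact radial N β τ hβ hτ i k m n x hx
    rw [lintegral_congr_ae this, lintegral_const_mul' _ _ ENNReal.ofReal_ne_top,
      ENNReal.toReal_mul, ENNReal.toReal_ofReal (by positivity)]
  · filter_upwards [simplex_nonneg N] with x hx
    exact Fi_nonneg _ _ _ hβ _ _ _ _ _ hx

lemma prod_norm (N : ℕ) (β : Fin (N+1) → ℝ) (τ : ℝ) (m n : Fin (N+1)) :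
    ∏ j, ((ex m n j).factorial / (τ * β j ^ (ex m n j + 1)) : ℝ) =
      (1 + kd m n) / (τ ^ (N+1) * (∏ j, β j) * (β m * β n)) := by
  rw [Finset.prod_div_distrib, Finset.prod_mul_distrib]
  simp only [pow_succ]
  rw [Finset.prod_mul_distrib, prod_ex m n β, Finset.prod_const, Finset.card_univ,
    Fintype.card_fin]
  congr 1
  · rw [Finset.prod_eq_single m]
    · by_cases h : m = n
      · simp [ex, kd, h]; norm_num
      · simp [ex, kd, h]
    · intro j _ hj
      by_cases h : j = n <;> simp [ex, hj, h]
      subst h; simp [hj]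
    · simp
  · ring

lemma cas {K : ℕ} (i m : Fin K) :
    (i = m ∧ kd i m = 1 ∧ (if i = m then 1 else 0 : ℕ) = 1) ∨
    (i ≠ m ∧ kd i m = 0 ∧ (if i = m then 1 else 0 : ℕ) = 0) := by
  by_cases h : i = m
  · left; simp [kd, h]
  · right; simp [kd, h]
end ISaux

/-- Raw log-ratio second moments `E[log(X_i/X_k)²]` of the inverse Schlömilch
distribution `IS(1 + e_m + e_n, β, τ)`.  (A Kronecker delta with several indices,
e.g. `δ_{imn} = kd i m * kd i n`, equals 1 iff all its indices coincide.) -/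
theorem is_special_raw_second_moment_squared
    (K : ℕ) (hK : 2 ≤ K) (τ : ℝ) (hτ : 0 < τ)
    (β : Fin K → ℝ) (hβ : ∀ i, 0 < β i) (i k m n : Fin K) :
    ((K : ℝ) * ((K : ℝ) + 1) * β m * β n / (J0 K β τ * (1 + kd m n))) *
      ∫ x, hfun K β τ x * (Real.log (x i) - Real.log (x k)) ^ 2 /
          (kfun K β τ x ^ 2 * x m ^ τ * x n ^ τ) ∂(simplexMeasure K)
      = τ⁻¹ ^ 2 *
          (kd i m * kd i n + kd k m * kd k n + 2 * (kd i k * kd i m * kd i n)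
            - 2 * (kd i m * kd k n) - 2 * (kd i n * kd k m)
            - (2 * kd i m + 2 * kd i n - 2 * kd k m - 2 * kd k n
                - kd i m * kd i n + kd k m * kd k n) *
              (Real.log (β i) - Real.log (β k))
            + (Real.log (β i) - Real.log (β k)) ^ 2
            + (1 - kd i k) * Real.pi ^ 2 / 3) := by
  obtain ⟨N, rfl⟩ : ∃ N, K = N + 1 := ⟨K - 1, by omega⟩
  change _ * ∫ x, ISaux.Fi (N+1) β τ i k m n x ∂(simplexMeasure (N+1)) = _
  by_cases hik : i = k
  · subst hik
    have : ∀ x, ISaux.Fi (N+1) β τ i i m n x = 0 := fun x => by simp [ISaux.Fi]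
    simp only [this, integral_zero, mul_zero, sub_self]
    simp [kd]
    right
    split_ifs <;> ring
  have h1 := ISaux.Q_integral (N+1) (ISaux.ex m n) β τ hβ hτ i k hik
  rw [ISaux.transfer N β τ hβ hτ, ISaux.prod_norm] at h1
  have hfac : ((N+2).factorial : ℝ) = (N+2) * (N+1) * N.factorial := by
    rw [Nat.factorial_succ, Nat.factorial_succ]; push_cast; ring
  have hN : (N.factorial : ℝ) ≠ 0 := by exact_mod_cast N.factorial_ne_zero
  have hpb : ∏ j, β j ≠ 0 := Finset.prod_ne_zero_iff.2 fun j _ => (hβ j).ne'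
  have hkd : 1 + kd m n ≠ 0 := by unfold kd; split_ifs <;> norm_num
  have hm := (hβ m).ne'
  have hn := (hβ n).ne'
  have hF : ∫ x, ISaux.Fi (N+1) β τ i k m n x ∂(simplexMeasure (N+1)) =
      (τ / ((N+2) * (N+1) * N.factorial)) * ((1 + kd m n) / (τ ^ (N+1) * (∏ j, β j) * (β m * β n)) *
      (ISaux.rho (ISaux.ex m n i) 2 (β i) τ
        - 2 * (ISaux.rho (ISaux.ex m n i) 1 (β i) τ * ISaux.rho (ISaux.ex m n k) 1 (β k) τ)
        + ISaux.rho (ISaux.ex m n k) 2 (β k) τ)) := by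
    rw [← h1, hfac]
    have : (N : ℝ) + 2 ≠ 0 := by positivity
    have : (N : ℝ) + 1 ≠ 0 := by positivity
    field_simp
  have hc : (((N+1 : ℕ) : ℝ) * (((N+1 : ℕ) : ℝ) + 1) * β m * β n / (J0 (N+1) β τ * (1 + kd m n))) *
      ((τ / ((N+2) * (N+1) * N.factorial)) *
        ((1 + kd m n) / (τ ^ (N+1) * (∏ j, β j) * (β m * β n)))) = 1 := by
    unfold J0
    rw [Nat.add_sub_cancel]
    push_cast
    have : (N : ℝ) + 2 ≠ 0 := by positivity
    have : (N : ℝ) + 1 ≠ 0 := by positivity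
    have e : (N : ℝ) + 1 + 1 = N + 2 := by ring
    rw [e, pow_succ]
    field_simp
  rw [hF, ← mul_assoc (τ / _), ← mul_assoc, hc, one_mul]
  have m11 : ISaux.M 1 1 = 1 + ISaux.M 0 1 := by
    have := ISaux.M_one_succ 0; simp [ISaux.M_zero] at this; linarith
  have m21 : ISaux.M 2 1 = 3 + 2 * ISaux.M 0 1 := by
    have := ISaux.M_one_succ 1; simp [ISaux.M_zero] at this; rw [this, m11]; ring
  have m12 : ISaux.M 1 2 = 2 * ISaux.M 0 1 + ISaux.M 0 2 := by
    have := ISaux.M_two_succ 0; simp at this; linarith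
  have m22 : ISaux.M 2 2 = 2 + 6 * ISaux.M 0 1 + 2 * ISaux.M 0 2 := by
    have := ISaux.M_two_succ 1; simp at this; rw [this, m11, m12]; ring
  have m02 := ISaux.M_zero_two
  have hτ' := hτ.ne'
  have hkik : kd i k = 0 := by simp [kd, hik]
  rcases ISaux.cas i m with ⟨him, a1, a2⟩ | ⟨him, a1, a2⟩ <;>
  rcases ISaux.cas i n with ⟨hin, b1, b2⟩ | ⟨hin, b1, b2⟩ <;>
  rcases ISaux.cas k m with ⟨hkm, c1, c2⟩ | ⟨hkm, c1, c2⟩ <;>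
  rcases ISaux.cas k n with ⟨hkn, d1, d2⟩ | ⟨hkn, d1, d2⟩ <;> first
    | exact absurd (him.trans hkm.symm) hik
    | exact absurd (hin.trans hkn.symm) hik
    | (simp only [ISaux.rho, ISaux.ex, a1, a2, b1, b2, c1, c2, d1, d2, hkik]
       norm_num [m11, m21, m12, m22, m02, Nat.factorial]
       field_simp
       ring)
end

section
/- Let K ≥ 2, τ > 0, and β ∈ ℝ^K with all β_i > 0. Define h(x) = (∑_{j=1}^K β_j/x_j^τ)^{−K} ∏_{i=1}^K x_i^{−(τ+1)}, k(x) = ∑_{j=1}^K β_j/x_j^τ, and J_0 = 1/((K−1)! τ^{K−1} ∏_{i=1}^K β_i). Then for all indices i, j: ∫_{S_K} h(x) · K/(k(x)² x_i^τ x_j^τ) d^{K−1}x = J_0 (1 + δ_{ij}) / ((K+1) β_i β_j), where δ is the Kronecker delta. (The integrand equals h(x) ∂² log h(x)/∂β_i ∂β_j, so this computes the β–β block of the Fisher information of the Concrete distribution.) -/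
open MeasureTheory Finset

/-- The one-dimensional factor. -/
noncomputable def gfac (τ b m t : ℝ) : ℝ :=
  Set.indicator (Set.Ioi 0) (fun t : ℝ => t ^ (-(τ * m) - 1) * Real.exp (-(b * t ^ (-τ)))) t

theorem gfac_nonneg (τ b m t : ℝ) : 0 ≤ gfac τ b m t := by
  unfold gfac
  apply Set.indicator_nonneg
  intro t ht
  have : (0 : ℝ) < t := ht
  positivity

theorem gfac_measurable (τ b m : ℝ) : Measurable (gfac τ b m) := by
  unfold gfac
  apply Measurable.indicator _ measurableSet_Ioi
  fun_prop

theorem gfac_of_pos (τ b m : ℝ) {t : ℝ} (ht : 0 < t) :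
    gfac τ b m t = t ^ (-(τ * m) - 1) * Real.exp (-(b * t ^ (-τ))) := by
  unfold gfac
  rw [Set.indicator_of_mem (show t ∈ Set.Ioi 0 from ht)]

theorem gfac_of_nonpos (τ b m : ℝ) {t : ℝ} (ht : t ≤ 0) : gfac τ b m t = 0 := by
  unfold gfac
  rw [Set.indicator_of_notMem (by simpa using ht)]

theorem gfac_integral {τ b m : ℝ} (hτ : 0 < τ) (hb : 0 < b) (hm : 0 < m) :
    ∫ t, gfac τ b m t = (1 / b) ^ m * Real.Gamma m / τ := by
  unfold gfac
  rw [integral_indicator measurableSet_Ioi]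
  have h1 := Real.integral_rpow_mul_exp_neg_mul_Ioi hm hb
  rw [← integral_comp_rpow_Ioi _ (neg_ne_zero.mpr hτ.ne')] at h1
  rw [← h1, eq_div_iff hτ.ne', ← integral_mul_const]
  apply setIntegral_congr_fun measurableSet_Ioi
  intro t ht
  have ht : (0 : ℝ) < t := ht
  simp only [abs_neg, abs_of_pos hτ, smul_eq_mul]
  rw [← Real.rpow_mul ht.le]
  have : t ^ (-(τ * m) - 1) = t ^ (-τ - 1) * t ^ (-τ * (m - 1)) := by
    rw [← Real.rpow_add ht]; congr 1; ring
  rw [this]; ring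

theorem gfac_integrable {τ b m : ℝ} (hτ : 0 < τ) (hb : 0 < b) (hm : 0 < m) :
    Integrable (gfac τ b m) := by
  by_contra h
  have h1 := gfac_integral hτ hb hm
  rw [integral_undef h] at h1
  have := Real.Gamma_pos_of_pos hm
  have : 0 < (1 / b) ^ m * Real.Gamma m / τ := by positivity
  linarith

theorem gfac_lintegral {τ b m : ℝ} (hτ : 0 < τ) (hb : 0 < b) (hm : 0 < m) :
    ∫⁻ t, ENNReal.ofReal (gfac τ b m t)
      = ENNReal.ofReal ((1 / b) ^ m * Real.Gamma m / τ) := by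
  rw [← gfac_integral hτ hb hm, ofReal_integral_eq_lintegral_ofReal (gfac_integrable hτ hb hm)
    (ae_of_all _ (gfac_nonneg τ b m))]

theorem gfac_prod_lintegral {n : ℕ} {τ : ℝ} {b m : Fin n → ℝ} (hτ : 0 < τ) (hb : ∀ l, 0 < b l)
    (hm : ∀ l, 0 < m l) :
    ∫⁻ y : Fin n → ℝ, ENNReal.ofReal (∏ l, gfac τ (b l) (m l) (y l))
      = ENNReal.ofReal (∏ l, ((1 / b l) ^ m l * Real.Gamma (m l) / τ)) := by
  rw [← ofReal_integral_eq_lintegral_ofReal]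
  · rw [integral_fintype_prod_volume_eq_prod (fun l => gfac τ (b l) (m l))]
    simp only [gfac_integral hτ (hb _) (hm _)]
  · exact Integrable.fintype_prod (f := fun l => gfac τ (b l) (m l))
      (fun l => gfac_integrable hτ (hb l) (hm l))
  · exact ae_of_all _ fun y => Finset.prod_nonneg fun l _ => gfac_nonneg _ _ _ _

theorem fillMap_castSucc (n : ℕ) (u : Fin n → ℝ) (l : Fin n) :
    fillMap (n + 1) u l.castSucc = u l := by
  simp [fillMap]

theorem fillMap_last (n : ℕ) (u : Fin n → ℝ) :
    fillMap (n + 1) u (Fin.last n) = 1 - ∑ j, u j := by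
  simp [fillMap]

theorem fillMap_sum (n : ℕ) (u : Fin n → ℝ) : ∑ l, fillMap (n + 1) u l = 1 := by
  rw [Fin.sum_univ_castSucc]
  simp only [fillMap_castSucc, fillMap_last]
  ring

theorem fillMap_measurable (K : ℕ) : Measurable (fillMap K) := by
  rw [measurable_pi_iff]
  intro l
  unfold fillMap
  by_cases h : (l : ℕ) < K - 1
  · simp only [h, dite_true]; fun_prop
  · simp only [h, dite_false]; fun_prop

theorem polar (n : ℕ) (G : (Fin (n + 1) → ℝ) → ENNReal) (hG : Measurable G) :
    ∫⁻ y, G y = ∫⁻ u : Fin n → ℝ, ∫⁻ s : ℝ,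
      ENNReal.ofReal (|s| ^ n) * G (s • fillMap (n + 1) u) := by
  have e := (volume_preserving_piFinSuccAbove (fun _ : Fin (n + 1) => ℝ) (Fin.last n)).symm
  rw [← e.lintegral_comp hG]
  have hme : Measurable (MeasurableEquiv.piFinSuccAbove (fun _ : Fin (n + 1) => ℝ)
    (Fin.last n)).symm := MeasurableEquiv.measurable _
  have h0 := lintegral_prod_symm' (μ := (volume : Measure ℝ))
    (ν := (volume : Measure (Fin n → ℝ))) _ (hG.comp hme)
  simp only [Function.comp_apply] at h0
  rw [Measure.volume_eq_prod]
  refine h0.trans ?_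
  have h1 : ∀ v : Fin n → ℝ, ∫⁻ t : ℝ, G ((MeasurableEquiv.piFinSuccAbove
      (fun _ : Fin (n + 1) => ℝ) (Fin.last n)).symm (t, v)) = ∫⁻ s : ℝ,
      G ((MeasurableEquiv.piFinSuccAbove
      (fun _ : Fin (n + 1) => ℝ) (Fin.last n)).symm (s - ∑ j, v j, v)) := by
    intro v
    rw [lintegral_sub_right_eq_self (μ := volume) (fun t => G ((MeasurableEquiv.piFinSuccAbove
      (fun _ : Fin (n + 1) => ℝ) (Fin.last n)).symm (t, v))) (∑ j, v j)]
  simp only [h1]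
  rw [lintegral_lintegral_swap]
  swap
  · apply Measurable.aemeasurable
    apply hG.comp (hme.comp _)
    fun_prop
  rw [lintegral_lintegral_swap (μ := (volume : Measure (Fin n → ℝ)))]
  swap
  · apply Measurable.aemeasurable
    apply Measurable.mul
    · fun_prop
    · apply hG.comp
      exact measurable_snd.smul ((fillMap_measurable (n + 1)).comp measurable_fst)
  have hs0 : ∀ᵐ s : ℝ, s ≠ 0 := by simp [ae_iff]
  apply lintegral_congr_ae
  filter_upwards [hs0] with s hs
  have h2 := Measure.map_addHaar_smul (volume : Measure (Fin n → ℝ)) hs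
  set Φ : (Fin n → ℝ) → ENNReal := fun v => G ((MeasurableEquiv.piFinSuccAbove
      (fun _ : Fin (n + 1) => ℝ) (Fin.last n)).symm (s - ∑ j, v j, v)) with hΦ
  have hΦm : Measurable Φ := by
    apply hG.comp (hme.comp _)
    fun_prop
  have h3 : ∀ u : Fin n → ℝ, G (s • fillMap (n + 1) u) = Φ (s • u) := by
    intro u
    simp only [hΦ]
    congr 1
    ext l
    refine Fin.lastCases ?_ (fun l => ?_) l
    · simp [MeasurableEquiv.piFinSuccAbove_symm_apply, fillMap_last, mul_sub, Finset.mul_sum]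
    · simp [MeasurableEquiv.piFinSuccAbove_symm_apply, fillMap_castSucc]
  simp only [h3]
  have h4 : ∫⁻ u, Φ (s • u) = ENNReal.ofReal |(s ^ n)⁻¹| * ∫⁻ v, Φ v := by
    rw [← lintegral_map (f := Φ) (g := fun u : Fin n → ℝ => s • u) hΦm (by fun_prop), h2,
      lintegral_smul_measure]
    simp
  rw [lintegral_const_mul _ (by fun_prop), h4, ← mul_assoc, ← ENNReal.ofReal_mul (by positivity)]
  have : |s| ^ n * |(s ^ n)⁻¹| = 1 := by
    rw [abs_inv, abs_pow]
    exact mul_inv_cancel₀ (pow_ne_zero _ (abs_ne_zero.mpr hs))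
  rw [this]; simp

theorem inner_pos {n : ℕ} {τ : ℝ} {b m : Fin (n + 1) → ℝ} (hτ : 0 < τ) (hb : ∀ l, 0 < b l)
    (hm : ∀ l, 0 < m l) (x : Fin (n + 1) → ℝ) (hx : ∀ l, 0 < x l) :
    ∫⁻ s : ℝ, ENNReal.ofReal (|s| ^ n) *
        ENNReal.ofReal (∏ l, gfac τ (b l) (m l) ((s • x) l)) =
      ENNReal.ofReal ((∏ l, x l ^ (-(τ * m l) - 1)) *
        ((1 / ∑ l, b l / x l ^ τ) ^ (∑ l, m l) * Real.Gamma (∑ l, m l) / τ)) := by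
  have hk : 0 < ∑ l, b l / x l ^ τ := Finset.sum_pos
    (fun l _ => div_pos (hb l) (Real.rpow_pos_of_pos (hx l) _)) Finset.univ_nonempty
  have hM : 0 < ∑ l, m l := Finset.sum_pos (fun l _ => hm l) Finset.univ_nonempty
  have hP : 0 ≤ ∏ l, x l ^ (-(τ * m l) - 1) :=
    Finset.prod_nonneg fun l _ => (Real.rpow_pos_of_pos (hx l) _).le
  rw [ENNReal.ofReal_mul hP, ← gfac_lintegral hτ hk hM, ← lintegral_const_mul _
    (gfac_measurable _ _ _).ennreal_ofReal]
  congr 1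
  ext s
  rw [← ENNReal.ofReal_mul (by positivity), ← ENNReal.ofReal_mul hP]
  congr 1
  rcases le_or_gt s 0 with hs | hs
  · rw [gfac_of_nonpos _ _ _ hs, Finset.prod_eq_zero (Finset.mem_univ 0)]
    · simp
    · apply gfac_of_nonpos
      simpa using mul_nonpos_of_nonpos_of_nonneg hs (hx 0).le
  · rw [gfac_of_pos _ _ _ hs, abs_of_pos hs]
    have h1 : ∀ l, gfac τ (b l) (m l) ((s • x) l) = s ^ (-(τ * m l) - 1) *
        x l ^ (-(τ * m l) - 1) * Real.exp (-(b l / x l ^ τ * s ^ (-τ))) := by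
      intro l
      have := hx l
      rw [Pi.smul_apply, smul_eq_mul, gfac_of_pos _ _ _ (by positivity),
        Real.mul_rpow hs.le this.le, Real.mul_rpow hs.le this.le, Real.rpow_neg this.le τ]
      congr 3
      ring
    simp only [h1, Finset.prod_mul_distrib]
    rw [← Real.exp_sum, ← Real.rpow_sum_of_pos hs, Finset.sum_neg_distrib, ← Finset.sum_mul]
    have h2 : s ^ (-(τ * ∑ l, m l) - 1) = s ^ n * s ^ (∑ l, (-(τ * m l) - 1)) := by
      rw [← Real.rpow_natCast, ← Real.rpow_add hs]
      congr 1
      simp [Finset.mul_sum]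
      ring
    rw [h2]; ring

theorem inner_zero {n : ℕ} {τ : ℝ} {b m : Fin (n + 1) → ℝ}
    (x : Fin (n + 1) → ℝ) (hsum : ∑ l, x l = 1) (hx : ¬ ∀ l, 0 < x l) :
    ∫⁻ s : ℝ, ENNReal.ofReal (|s| ^ n) *
        ENNReal.ofReal (∏ l, gfac τ (b l) (m l) ((s • x) l)) = 0 := by
  push Not at hx
  obtain ⟨p, hp⟩ := hx
  obtain ⟨q, hq⟩ : ∃ q, 0 < x q := by
    by_contra! h
    have := Finset.sum_nonpos (fun l (_ : l ∈ Finset.univ) => h l)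
    linarith
  have : ∀ s : ℝ, ∏ l, gfac τ (b l) (m l) ((s • x) l) = 0 := by
    intro s
    rcases le_or_gt s 0 with hs | hs
    · apply Finset.prod_eq_zero (Finset.mem_univ q)
      apply gfac_of_nonpos
      simpa using mul_nonpos_of_nonpos_of_nonneg hs hq.le
    · apply Finset.prod_eq_zero (Finset.mem_univ p)
      apply gfac_of_nonpos
      simpa using mul_nonpos_of_nonneg_of_nonpos hs.le hp
  simp only [this]
  simp

open Classical in
theorem key {n : ℕ} {τ : ℝ} {b m : Fin (n + 1) → ℝ} (hτ : 0 < τ) (hb : ∀ l, 0 < b l)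
    (hm : ∀ l, 0 < m l) :
    ∫⁻ u : Fin n → ℝ, (if ∀ l, 0 < fillMap (n + 1) u l then
      ENNReal.ofReal ((∏ l, fillMap (n + 1) u l ^ (-(τ * m l) - 1)) *
        ((1 / ∑ l, b l / fillMap (n + 1) u l ^ τ) ^ (∑ l, m l)
          * Real.Gamma (∑ l, m l) / τ)) else 0) =
      ENNReal.ofReal (∏ l, ((1 / b l) ^ m l * Real.Gamma (m l) / τ)) := by
  rw [← gfac_prod_lintegral hτ hb hm, polar]
  · congr 1
    ext u
    split_ifs with h
    · exact (inner_pos hτ hb hm _ h).symm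
    · exact (inner_zero _ (fillMap_sum n u) h).symm
  · apply Measurable.ennreal_ofReal
    apply Finset.measurable_prod
    intro l _
    exact (gfac_measurable _ _ _).comp (measurable_pi_apply l)

/-- The exponents. -/
noncomputable def mexp {K : ℕ} (i j l : Fin K) : ℝ :=
  1 + (if l = i then 1 else 0) + (if l = j then 1 else 0)

theorem mexp_pos {K : ℕ} (i j l : Fin K) : 0 < mexp i j l := by
  unfold mexp
  split_ifs <;> norm_num

theorem mexp_sum {K : ℕ} (i j : Fin K) : ∑ l, mexp i j l = (K : ℝ) + 2 := by
  unfold mexp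
  simp [Finset.sum_add_distrib]
  ring

theorem mexp_prod {K : ℕ} (i j : Fin K) (x : Fin K → ℝ) (hx : ∀ l, 0 < x l) (τ : ℝ) :
    ∏ l, x l ^ (-(τ * mexp i j l) - 1) =
      (∏ l, x l ^ (-(τ + 1))) * (x i ^ τ)⁻¹ * (x j ^ τ)⁻¹ := by
  have h : ∀ l, x l ^ (-(τ * mexp i j l) - 1) = x l ^ (-(τ + 1)) *
      (if l = i then (x l ^ τ)⁻¹ else 1) * (if l = j then (x l ^ τ)⁻¹ else 1) := by
    intro l
    unfold mexp
    rw [← Real.rpow_neg (hx l).le]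
    split_ifs <;> simp only [mul_one, ← Real.rpow_add (hx l)] <;> congr 1 <;> ring
  simp only [h, Finset.prod_mul_distrib]
  simp

theorem mexp_prod' {K : ℕ} (i j : Fin K) (b : Fin K → ℝ) (hb : ∀ l, 0 < b l) :
    ∏ l, (1 / b l) ^ (mexp i j l) = (∏ l, b l)⁻¹ * (b i)⁻¹ * (b j)⁻¹ := by
  have h : ∀ l, (1 / b l) ^ (mexp i j l) = (b l)⁻¹ *
      (if l = i then (b l)⁻¹ else 1) * (if l = j then (b l)⁻¹ else 1) := by
    intro l
    have : 0 < (b l)⁻¹ := inv_pos.mpr (hb l)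
    unfold mexp
    rw [one_div, Real.rpow_add this, Real.rpow_add this]
    split_ifs <;> simp
  simp only [h, Finset.prod_mul_distrib]
  simp

theorem mexp_gamma {K : ℕ} (i j : Fin K) :
    ∏ l, Real.Gamma (mexp i j l) = 1 + kd i j := by
  have h3 : Real.Gamma 3 = 2 := by
    rw [show (3 : ℝ) = 2 + 1 by norm_num, Real.Gamma_add_one (by norm_num), Real.Gamma_two]
    norm_num
  have h : ∀ l, Real.Gamma (mexp i j l) = if l = i then 1 + kd i j else 1 := by
    intro l
    unfold mexp kd
    by_cases h1 : l = i
    · subst h1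
      by_cases h2 : l = j
      · simp [h2]; norm_num [h3]
      · simp [h2]; norm_num
    · by_cases h2 : l = j
      · subst h2
        simp [h1]; norm_num
      · simp [h1, h2]
  simp [h]

theorem main_aux (n : ℕ) (τ : ℝ) (hτ : 0 < τ)
    (β : Fin (n + 1) → ℝ) (hβ : ∀ i, 0 < β i) (i j : Fin (n + 1)) :
    ∫ x, hfun (n + 1) β τ x * ((n + 1 : ℕ) : ℝ) / (kfun (n + 1) β τ x ^ 2 * x i ^ τ * x j ^ τ)
        ∂(simplexMeasure (n + 1))
      = J0 (n + 1) β τ * (1 + kd i j) / ((((n + 1 : ℕ) : ℝ) + 1) * β i * β j) := by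
  classical
  have hmeas : Measurable (fun x : Fin (n + 1) → ℝ => hfun (n + 1) β τ x * ((n + 1 : ℕ) : ℝ) /
      (kfun (n + 1) β τ x ^ 2 * x i ^ τ * x j ^ τ)) := by
    unfold hfun kfun
    fun_prop
  have hS : MeasurableSet {u : Fin n → ℝ | (∀ j, 0 ≤ u j) ∧ ∑ j, u j ≤ 1} := by
    apply MeasurableSet.inter
    · have : {u : Fin n → ℝ | ∀ j, 0 ≤ u j} = ⋂ j, {u | 0 ≤ u j} := by ext; simp
      change MeasurableSet {u : Fin n → ℝ | ∀ j, 0 ≤ u j}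
      rw [this]
      exact MeasurableSet.iInter fun j => measurableSet_le (by fun_prop) (by fun_prop)
    · change MeasurableSet {u : Fin n → ℝ | ∑ j, u j ≤ 1}
      exact measurableSet_le (by fun_prop) (by fun_prop)
  have hG : Real.Gamma (∑ l, mexp i j l) = ((n + 2).factorial : ℝ) := by
    rw [mexp_sum, ← Real.Gamma_nat_eq_factorial]
    congr 1; push_cast; ring
  set c : ℝ := (n + 1 : ℕ) * τ / ((n + 2).factorial : ℝ) with hc
  have hf : (0 : ℝ) < ((n + 2).factorial : ℝ) := by positivity
  have hc0 : 0 ≤ c := by positivity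
  have hval : ∀ x : Fin (n + 1) → ℝ, (∀ l, 0 < x l) →
      hfun (n + 1) β τ x * ((n + 1 : ℕ) : ℝ) / (kfun (n + 1) β τ x ^ 2 * x i ^ τ * x j ^ τ) =
      c * ((∏ l, x l ^ (-(τ * mexp i j l) - 1)) *
        ((1 / ∑ l, β l / x l ^ τ) ^ (∑ l, mexp i j l)
          * Real.Gamma (∑ l, mexp i j l) / τ)) := by
    intro x hx
    rw [hG, mexp_sum, mexp_prod i j x hx τ]
    unfold hfun kfun
    have hk : 0 < ∑ l, β l / x l ^ τ := Finset.sum_pos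
      (fun l _ => div_pos (hβ l) (Real.rpow_pos_of_pos (hx l) _)) Finset.univ_nonempty
    set k := ∑ l, β l / x l ^ τ
    have h1 : (1 / k) ^ (((n + 1 : ℕ) : ℝ) + 2) = k ^ (-((n + 1 : ℕ) : ℝ)) * (k ^ 2)⁻¹ := by
      rw [one_div, Real.inv_rpow hk.le, Real.rpow_add hk, Real.rpow_neg hk.le, mul_inv]
      norm_num
    rw [h1, hc]
    have := Real.rpow_pos_of_pos (hx i) τ
    have := Real.rpow_pos_of_pos (hx j) τ
    field_simp
  have hnn : ∀ x : Fin (n + 1) → ℝ, (∀ l, 0 < x l) →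
      0 ≤ (∏ l, x l ^ (-(τ * mexp i j l) - 1)) *
        ((1 / ∑ l, β l / x l ^ τ) ^ (∑ l, mexp i j l)
          * Real.Gamma (∑ l, mexp i j l) / τ) := by
    intro x hx
    rw [hG]
    have hk : 0 < ∑ l, β l / x l ^ τ := Finset.sum_pos
      (fun l _ => div_pos (hβ l) (Real.rpow_pos_of_pos (hx l) _)) Finset.univ_nonempty
    have hP : 0 ≤ ∏ l, x l ^ (-(τ * mexp i j l) - 1) :=
      Finset.prod_nonneg fun l _ => (Real.rpow_pos_of_pos (hx l) _).le
    positivity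
  have hzero : ∀ x : Fin (n + 1) → ℝ, (∀ l, 0 ≤ x l) → (¬ ∀ l, 0 < x l) →
      hfun (n + 1) β τ x = 0 := by
    intro x hx hx'
    push Not at hx'
    obtain ⟨l, hl⟩ := hx'
    have hl0 : x l = 0 := le_antisymm hl (hx l)
    unfold hfun
    rw [Finset.prod_eq_zero (Finset.mem_univ l), mul_zero]
    rw [hl0, Real.zero_rpow (by linarith)]
  have hfill : ∀ u : Fin n → ℝ, ((∀ j, 0 ≤ u j) ∧ ∑ j, u j ≤ 1) ↔
      ∀ l, 0 ≤ fillMap (n + 1) u l := by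
    intro u
    rw [Fin.forall_fin_succ']
    simp only [fillMap_castSucc, fillMap_last, sub_nonneg]
  unfold simplexMeasure
  rw [integral_map (fillMap_measurable _).aemeasurable hmeas.aestronglyMeasurable]
  change ∫ u in {u : Fin n → ℝ | (∀ j, 0 ≤ u j) ∧ ∑ j, u j ≤ 1}, _ = _
  rw [integral_eq_lintegral_of_nonneg_ae]
  rotate_left
  · rw [Filter.EventuallyLE, ae_restrict_iff' hS]
    apply ae_of_all
    intro u hu
    have hu := (hfill u).1 hu
    by_cases h : ∀ l, 0 < fillMap (n + 1) u l
    · simp only [Pi.zero_apply]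
      rw [hval _ h]
      exact mul_nonneg hc0 (hnn _ h)
    · simp [hzero _ hu h]
  · exact (hmeas.comp (fillMap_measurable _)).aestronglyMeasurable
  have hkey := key hτ hβ (mexp_pos i j)
  rw [← lintegral_indicator hS]
  have heq : ∀ u : Fin n → ℝ,
      Set.indicator {u : Fin n → ℝ | (∀ j, 0 ≤ u j) ∧ ∑ j, u j ≤ 1} (fun u =>
        ENNReal.ofReal (hfun (n + 1) β τ (fillMap (n + 1) u) * ((n + 1 : ℕ) : ℝ) /
          (kfun (n + 1) β τ (fillMap (n + 1) u) ^ 2 * fillMap (n + 1) u i ^ τ *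
            fillMap (n + 1) u j ^ τ))) u =
      ENNReal.ofReal c * (if ∀ l, 0 < fillMap (n + 1) u l then
      ENNReal.ofReal ((∏ l, fillMap (n + 1) u l ^ (-(τ * mexp i j l) - 1)) *
        ((1 / ∑ l, β l / fillMap (n + 1) u l ^ τ) ^ (∑ l, mexp i j l)
          * Real.Gamma (∑ l, mexp i j l) / τ)) else 0) := by
    intro u
    by_cases h : ∀ l, 0 < fillMap (n + 1) u l
    · rw [if_pos h, Set.indicator_of_mem, hval _ h, ENNReal.ofReal_mul hc0]
      exact (hfill u).2 fun l => (h l).le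
    · rw [if_neg h, mul_zero]
      apply Set.indicator_apply_eq_zero.2
      intro hu
      rw [hzero _ ((hfill u).1 hu) h]
      simp
  rw [lintegral_congr heq, lintegral_const_mul' _ _ ENNReal.ofReal_ne_top]
  have hkd : (0 : ℝ) ≤ 1 + kd i j := by unfold kd; split_ifs <;> norm_num
  have hkey2 : ∏ l, ((1 / β l) ^ mexp i j l * Real.Gamma (mexp i j l) / τ) =
      (∏ l, β l)⁻¹ * (β i)⁻¹ * (β j)⁻¹ * (1 + kd i j) / τ ^ (n + 1) := by
    rw [Finset.prod_div_distrib, Finset.prod_mul_distrib, mexp_prod' i j β hβ, mexp_gamma]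
    simp
  rw [hkey2] at hkey
  have hp : 0 < ∏ l, β l := Finset.prod_pos fun l _ => hβ l
  have hi := hβ i
  have hj := hβ j
  rw [hkey, ← ENNReal.ofReal_mul hc0, ENNReal.toReal_ofReal (by positivity)]
  unfold J0
  rw [hc, Nat.factorial_succ, Nat.factorial_succ]
  have : (0 : ℝ) < (n.factorial : ℝ) := by positivity
  simp only [Nat.add_sub_cancel]
  push_cast
  field_simp
  ring

/-- The β–β block of the Fisher information of the Concrete distribution:
`∫ h(x) ∂²log h/∂β_i∂β_j = J_0 (1 + δ_ij)/((K+1) β_i β_j)`. -/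
theorem concrete_fisher_beta_beta
    (K : ℕ) (hK : 2 ≤ K) (τ : ℝ) (hτ : 0 < τ)
    (β : Fin K → ℝ) (hβ : ∀ i, 0 < β i) (i j : Fin K) :
    ∫ x, hfun K β τ x * (K : ℝ) / (kfun K β τ x ^ 2 * x i ^ τ * x j ^ τ)
        ∂(simplexMeasure K)
      = J0 K β τ * (1 + kd i j) / (((K : ℝ) + 1) * β i * β j) := by
  obtain ⟨n, rfl⟩ : ∃ n, K = n + 1 := ⟨K - 1, by omega⟩
  exact main_aux n τ hτ β hβ i j
end

section
/- Let K ≥ 2, τ > 0, and β ∈ ℝ^K with all β_i > 0. Define h(x) = (∑_{j=1}^K β_j/x_j^τ)^{−K} ∏_{i=1}^K x_i^{−(τ+1)}, k(x) = ∑_{j=1}^K β_j/x_j^τ, and J_0 = 1/((K−1)! τ^{K−1} ∏_{i=1}^K β_i). Then for each index i: ∫_{S_K} h(x) · K [ log x_i/(k(x) x_i^τ) − (∑_{k=1}^K (β_k/x_k^τ) log x_k)/(k(x)² x_i^τ) ] d^{K−1}x = −J_0 (∑_{k=1}^K log β_k − K log β_i) / ((K+1) β_i τ). (The integrand equals h(x)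 ∂² log h(x)/∂β_i ∂τ, so this computes the mixed β–τ components of the Fisher information of the Concrete distribution.) -/
open MeasureTheory Finset

/-- The affine parametrisation of the hyperplane of coordinate sum `s`. -/
noncomputable def fillS (n : ℕ) (s : ℝ) (z : Fin n → ℝ) : Fin (n + 1) → ℝ :=
  Fin.snoc (α := fun _ => ℝ) z (s - ∑ j, z j)

lemma fillMap_eq (n : ℕ) (u : Fin n → ℝ) : fillMap (n + 1) u = fillS n 1 u := by
  funext i
  unfold fillMap fillS Fin.snoc
  simp only [Nat.add_sub_cancel]
  rfl

lemma measurable_fillS (n : ℕ) : Measurable (fun p : ℝ × (Fin n → ℝ) => fillS n p.1 p.2) := by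
  rw [measurable_pi_iff]
  intro i
  refine Fin.lastCases ?_ (fun j => ?_) i
  · simp only [fillS, Fin.snoc_last]
    fun_prop
  · simp only [fillS, Fin.snoc_castSucc]
    fun_prop

lemma fillS_smul (n : ℕ) (s : ℝ) (u : Fin n → ℝ) : fillS n s (s • u) = s • fillS n 1 u := by
  funext i
  refine Fin.lastCases ?_ (fun j => ?_) i
  · simp [fillS, Fin.snoc_last, ← Finset.mul_sum, mul_sub]
  · simp [fillS, Fin.snoc_castSucc]

lemma fillS_sum (n : ℕ) (s : ℝ) (z : Fin n → ℝ) : ∑ i, fillS n s z i = s := by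
  simp [Fin.sum_univ_castSucc, fillS]

/-- the open orthant -/
def posO (K : ℕ) : Set (Fin K → ℝ) := Set.univ.pi fun _ => Set.Ioi 0

lemma measurableSet_posO (K : ℕ) : MeasurableSet (posO K) :=
  MeasurableSet.univ_pi fun _ => measurableSet_Ioi

lemma mem_posO {K : ℕ} {y : Fin K → ℝ} : y ∈ posO K ↔ ∀ i, 0 < y i := by
  simp [posO]

/-- open simplex in the coordinates -/
def openS (n : ℕ) : Set (Fin n → ℝ) := {u | fillS n 1 u ∈ posO (n + 1)}

lemma measurable_fillS1 (n : ℕ) (s : ℝ) : Measurable (fillS n s) :=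
  (measurable_fillS n).comp (measurable_const.prodMk measurable_id)

lemma measurableSet_openS (n : ℕ) : MeasurableSet (openS n) :=
  (measurable_fillS1 n 1) (measurableSet_posO _)

lemma lintegral_scale (n : ℕ) (s : ℝ) (hs : 0 < s) (f : (Fin n → ℝ) → ENNReal)
    (hf : Measurable f) :
    ∫⁻ z, f z = ENNReal.ofReal (s ^ n) * ∫⁻ u, f (s • u) := by
  have h := Measure.map_addHaar_smul (volume : Measure (Fin n → ℝ)) hs.ne'
  have h2 : ∫⁻ u, f (s • u) = ENNReal.ofReal |(s ^ n)⁻¹| * ∫⁻ z, f z := by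
    rw [← lintegral_map (f := f) (g := fun x => s • x) hf (by fun_prop), h, lintegral_smul_measure]
    simp
  have h3 : 0 < s ^ n := by positivity
  rw [h2, ← mul_assoc, ← ENNReal.ofReal_mul h3.le, abs_of_pos (by positivity),
    mul_inv_cancel₀ h3.ne']
  simp

lemma polar_lintegral (n : ℕ) (f : (Fin (n + 1) → ℝ) → ENNReal) (hf : Measurable f) :
    ∫⁻ y in posO (n + 1), f y =
      ∫⁻ s in Set.Ioi (0 : ℝ), ENNReal.ofReal (s ^ n) * ∫⁻ u in openS n, f (s • fillS n 1 u) := by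
  set H : (Fin (n + 1) → ℝ) → ENNReal := (posO (n + 1)).indicator f with hH
  have hHm : Measurable H := hf.indicator (measurableSet_posO _)
  rw [← lintegral_indicator (measurableSet_posO _), ← hH]
  have e := (volume_preserving_piFinSuccAbove (fun _ : Fin (n + 1) => ℝ) (Fin.last n)).symm
  have hcoe : ∀ p : ℝ × (Fin n → ℝ),
      (MeasurableEquiv.piFinSuccAbove (fun _ : Fin (n + 1) => ℝ) (Fin.last n)).symm p
        = fillS n (p.1 + ∑ j, p.2 j) p.2 := by
    intro p
    simp [MeasurableEquiv.piFinSuccAbove, fillS, Fin.insertNthEquiv]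
  have hm1 : Measurable fun p : ℝ × (Fin n → ℝ) => fillS n (p.1 + ∑ j, p.2 j) p.2 :=
    (measurable_fillS n).comp
      (g := fun q : ℝ × (Fin n → ℝ) => fillS n q.1 q.2)
      (f := fun p : ℝ × (Fin n → ℝ) => (p.1 + ∑ j, p.2 j, p.2)) (by fun_prop)
  rw [e.lintegral_map_equiv H]
  simp_rw [hcoe]
  rw [Measure.volume_eq_prod, lintegral_prod_symm _ (by exact (hHm.comp hm1).aemeasurable)]
  have h1 : ∀ z : Fin n → ℝ, ∫⁻ v : ℝ, H (fillS n (v + ∑ j, z j) z) = ∫⁻ s : ℝ, H (fillS n s z) :=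
    fun z => lintegral_add_right_eq_self (fun s => H (fillS n s z)) _
  simp only [h1]
  rw [lintegral_lintegral_swap (f := fun z s => H (fillS n s z))
    (hHm.comp ((measurable_fillS n).comp measurable_swap)).aemeasurable,
    ← lintegral_indicator measurableSet_Ioi]
  refine lintegral_congr fun s => ?_
  by_cases hs : 0 < s
  · rw [Set.indicator_of_mem (Set.mem_Ioi.2 hs),
      lintegral_scale n s hs (fun z => H (fillS n s z)) (hHm.comp (measurable_fillS1 n s)),
      ← lintegral_indicator (measurableSet_openS n)]
    congr 1
    refine lintegral_congr fun u => ?_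
    simp only [fillS_smul, hH]
    have : s • fillS n 1 u ∈ posO (n + 1) ↔ u ∈ openS n := by
      simp [openS, mem_posO, hs]
    by_cases hu : u ∈ openS n
    · rw [Set.indicator_of_mem (this.2 hu), Set.indicator_of_mem hu]
    · rw [Set.indicator_of_notMem (fun h => hu (this.1 h)), Set.indicator_of_notMem hu]
  · rw [Set.indicator_of_notMem (by simpa using hs)]
    rw [lintegral_eq_zero_iff (by exact hHm.comp (measurable_fillS1 n s))]
    refine Filter.Eventually.of_forall fun z => ?_
    simp only [hH, Pi.zero_apply]
    refine Set.indicator_of_notMem (fun hz => hs ?_) _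
    rw [mem_posO] at hz
    rw [← fillS_sum n s z]
    exact Finset.sum_pos (fun i _ => hz i) Finset.univ_nonempty

lemma polar_measure (n : ℕ) :
    (volume : Measure (Fin (n + 1) → ℝ)).restrict (posO (n + 1)) =
      Measure.map (fun p : ℝ × (Fin n → ℝ) => p.1 • fillS n 1 p.2)
        ((((volume : Measure ℝ).restrict (Set.Ioi 0)).withDensity
          (fun s => ENNReal.ofReal (s ^ n))).prod
          ((volume : Measure (Fin n → ℝ)).restrict (openS n))) := by
  have hm : Measurable (fun p : ℝ × (Fin n → ℝ) => p.1 • fillS n 1 p.2) :=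
    measurable_fst.smul ((measurable_fillS1 n 1).comp measurable_snd)
  refine Measure.ext_of_lintegral _ fun f hf => ?_
  rw [polar_lintegral n f hf, lintegral_map hf hm, lintegral_prod _ (by exact (hf.comp hm).aemeasurable),
    lintegral_withDensity_eq_lintegral_mul _ (by fun_prop)]
  · rfl
  · exact (hf.comp hm).lintegral_prod_right'

lemma polar_integral (n : ℕ) (G : (Fin (n + 1) → ℝ) → ℝ)
    (hG : IntegrableOn G (posO (n + 1))) :
    ∫ y in posO (n + 1), G y =
      ∫ u in openS n, ∫ s in Set.Ioi (0 : ℝ), s ^ n * G (s • fillS n 1 u) := by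
  have hm : Measurable (fun p : ℝ × (Fin n → ℝ) => p.1 • fillS n 1 p.2) :=
    measurable_fst.smul ((measurable_fillS1 n 1).comp measurable_snd)
  unfold IntegrableOn at hG
  rw [polar_measure] at hG ⊢
  rw [integral_map hm.aemeasurable hG.1]
  rw [integrable_map_measure hG.1 hm.aemeasurable] at hG
  rw [integral_prod_symm _ (by exact hG)]
  refine integral_congr_ae (Filter.Eventually.of_forall fun u => ?_)
  beta_reduce
  rw [integral_withDensity_eq_integral_toReal_smul (by fun_prop) (by simp)]
  refine setIntegral_congr_fun measurableSet_Ioi fun s hs => ?_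
  have : 0 < s := hs
  simp only [smul_eq_mul]
  rw [ENNReal.toReal_ofReal (by positivity)]

lemma oneD_integral (τ b : ℝ) (hτ : 0 < τ) (hb : 0 < b) (g : ℝ → ℝ) :
    ∫ y in Set.Ioi (0 : ℝ), τ * b * y ^ (-τ - 1) * g (b * y ^ (-τ)) = ∫ t in Set.Ioi (0 : ℝ), g t := by
  have h1 := integral_comp_rpow_Ioi (fun r => b * g (b * r)) (p := -τ) (by linarith)
  have h2 := integral_comp_mul_left_Ioi g 0 hb
  rw [integral_const_mul, h2, mul_zero, smul_eq_mul, mul_inv_cancel_left₀ hb.ne'] at h1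
  rw [← h1]
  refine integral_congr_ae (Filter.Eventually.of_forall fun y => ?_)
  simp only [abs_neg, abs_of_pos hτ, smul_eq_mul]
  ring

lemma oneD_integrable (τ b : ℝ) (hτ : 0 < τ) (hb : 0 < b) (g : ℝ → ℝ)
    (hg : IntegrableOn g (Set.Ioi 0)) :
    IntegrableOn (fun y : ℝ => τ * b * y ^ (-τ - 1) * g (b * y ^ (-τ))) (Set.Ioi 0) := by
  have h2 := (integrableOn_Ioi_comp_mul_left_iff g 0 hb).2 (by simpa using hg)
  have h1 := (integrableOn_Ioi_comp_rpow_iff (fun r => b * g (b * r)) (p := -τ) (by linarith)).2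
    (h2.const_mul b)
  refine h1.congr (Filter.Eventually.of_forall fun y => ?_)
  simp only [abs_neg, abs_of_pos hτ, smul_eq_mul]
  ring

lemma pow_exp_integrable (m : ℕ) :
    IntegrableOn (fun t : ℝ => t ^ m * Real.exp (-t)) (Set.Ioi 0) := by
  have h := Real.GammaIntegral_convergent (s := (m : ℝ) + 1) (by positivity)
  refine h.congr (Filter.Eventually.of_forall fun y => ?_)
  simp [mul_comm]

lemma pow_exp_integral (m : ℕ) :
    ∫ t in Set.Ioi (0 : ℝ), t ^ m * Real.exp (-t) = (m.factorial : ℝ) := by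
  rw [← Real.Gamma_nat_eq_factorial, Real.Gamma_eq_integral (by positivity)]
  refine integral_congr_ae (Filter.Eventually.of_forall fun y => ?_)
  simp [mul_comm]

lemma log_exp_integrable :
    IntegrableOn (fun t : ℝ => t * Real.log t * Real.exp (-t)) (Set.Ioi 0) := by
  have h := (pow_exp_integrable 0).add (pow_exp_integrable 2)
  refine h.mono' (by fun_prop) ?_
  refine (ae_restrict_iff' measurableSet_Ioi).2 (Filter.Eventually.of_forall fun t ht => ?_)
  have ht : 0 < t := ht
  have e := Real.exp_pos (-t)
  simp only [Pi.add_apply, Real.norm_eq_abs, abs_mul, abs_of_pos ht, abs_of_pos e]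
  rw [← add_mul]
  refine mul_le_mul_of_nonneg_right ?_ e.le
  have h1 := Real.log_le_sub_one_of_pos ht
  have h2 := Real.log_le_sub_one_of_pos (inv_pos.2 ht)
  rw [Real.log_inv] at h2
  have h3 : t * t⁻¹ = 1 := mul_inv_cancel₀ ht.ne'
  rcases abs_cases (Real.log t) with ⟨h, _⟩ | ⟨h, _⟩ <;> rw [h] <;> nlinarith

/-- The one dimensional density. -/
noncomputable def fa (τ b y : ℝ) : ℝ := τ * b * y ^ (-τ - 1) * Real.exp (-(b * y ^ (-τ)))

lemma fa_pow (τ b : ℝ) (hτ : 0 < τ) (hb : 0 < b) (m : ℕ) :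
    IntegrableOn (fun y => fa τ b y * (b * y ^ (-τ)) ^ m) (Set.Ioi 0) ∧
    ∫ y in Set.Ioi (0 : ℝ), fa τ b y * (b * y ^ (-τ)) ^ m = (m.factorial : ℝ) := by
  have e : (fun y => fa τ b y * (b * y ^ (-τ)) ^ m) =
      fun y : ℝ => τ * b * y ^ (-τ - 1) * (fun t : ℝ => t ^ m * Real.exp (-t)) (b * y ^ (-τ)) := by
    funext y; simp only [fa]; ring
  rw [e]
  exact ⟨oneD_integrable τ b hτ hb _ (pow_exp_integrable m),
    (oneD_integral τ b hτ hb _).trans (pow_exp_integral m)⟩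

lemma fa_log (τ b : ℝ) (hτ : 0 < τ) (hb : 0 < b) :
    IntegrableOn (fun y => fa τ b y * (b * y ^ (-τ) * Real.log y)) (Set.Ioi 0) ∧
    ∫ y in Set.Ioi (0 : ℝ), fa τ b y * (b * y ^ (-τ) * Real.log y) =
      (Real.log b - ∫ t in Set.Ioi (0 : ℝ), t * Real.log t * Real.exp (-t)) / τ := by
  set g : ℝ → ℝ := fun t => Real.log b / τ * (t ^ 1 * Real.exp (-t)) -
    1 / τ * (t * Real.log t * Real.exp (-t)) with hg
  have i1 := (pow_exp_integrable 1).const_mul (Real.log b / τ)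
  have i2 := log_exp_integrable.const_mul (1 / τ)
  have e : Set.EqOn (fun y : ℝ => τ * b * y ^ (-τ - 1) * g (b * y ^ (-τ)))
      (fun y => fa τ b y * (b * y ^ (-τ) * Real.log y)) (Set.Ioi 0) := by
    intro y hy
    have hy : 0 < y := hy
    simp only [fa, hg]
    rw [Real.log_mul hb.ne' (Real.rpow_pos_of_pos hy _).ne', Real.log_rpow hy]
    field_simp
    ring
  refine ⟨(oneD_integrable τ b hτ hb g (i1.sub i2)).congr_fun e measurableSet_Ioi, ?_⟩
  rw [← setIntegral_congr_fun measurableSet_Ioi e, oneD_integral τ b hτ hb g, hg,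
    integral_sub i1 i2, integral_const_mul, integral_const_mul, pow_exp_integral]
  simp
  ring

lemma prod_int {K : ℕ} (f : Fin K → ℝ → ℝ) (P Q : ℝ → ℝ) (i k : Fin K) (hik : i ≠ k)
    (hf : ∀ j, IntegrableOn (f j) (Set.Ioi 0)) (hf1 : ∀ j, ∫ y in Set.Ioi (0 : ℝ), f j y = 1)
    (hP : IntegrableOn (fun y => f i y * P y) (Set.Ioi 0))
    (hQ : IntegrableOn (fun y => f k y * Q y) (Set.Ioi 0)) :
    IntegrableOn (fun y : Fin K → ℝ => (∏ j, f j (y j)) * (P (y i) * Q (y k))) (posO K) ∧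
    ∫ y in posO K, (∏ j, f j (y j)) * (P (y i) * Q (y k)) =
      (∫ y in Set.Ioi (0 : ℝ), f i y * P y) * ∫ y in Set.Ioi (0 : ℝ), f k y * Q y := by
  set F : Fin K → ℝ → ℝ := fun j y =>
    f j y * ((if j = i then P y else 1) * (if j = k then Q y else 1)) with hF
  have e : (fun y : Fin K → ℝ => (∏ j, f j (y j)) * (P (y i) * Q (y k))) =
      fun y => ∏ j, F j (y j) := by
    funext y
    simp only [hF, Finset.prod_mul_distrib]
    simp
  have hm : (volume : Measure (Fin K → ℝ)).restrict (posO K) =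
      Measure.pi fun _ => (volume : Measure ℝ).restrict (Set.Ioi 0) := by
    rw [posO, volume_pi, Measure.restrict_pi_pi]
  have hint : ∀ j, IntegrableOn (F j) (Set.Ioi 0) := by
    intro j
    by_cases h1 : j = i
    · subst h1; simpa [hF, hik] using hP
    by_cases h2 : j = k
    · subst h2; simpa [hF, h1] using hQ
    simpa [hF, h1, h2] using hf j
  rw [e]
  unfold IntegrableOn
  rw [hm]
  refine ⟨Integrable.fintype_prod hint, ?_⟩
  rw [integral_fintype_prod_eq_prod]
  have : ∀ j, ∫ y in Set.Ioi (0 : ℝ), F j y =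
      (if j = i then ∫ y in Set.Ioi (0 : ℝ), f i y * P y else 1) *
      (if j = k then ∫ y in Set.Ioi (0 : ℝ), f k y * Q y else 1) := by
    intro j
    by_cases h1 : j = i
    · subst h1; simp [hF, hik]
    by_cases h2 : j = k
    · subst h2; simp [hF, h1]
    simpa [hF, h1, h2] using hf1 j
  simp only [this, Finset.prod_mul_distrib]
  simp

/-- The auxiliary function on the orthant. -/
noncomputable def Gfun {K : ℕ} (τ : ℝ) (β : Fin K → ℝ) (i : Fin K) (y : Fin K → ℝ) : ℝ :=
  (∏ j, fa τ (β j) (y j)) * ∑ k, (β i * y i ^ (-τ)) * (β k * y k ^ (-τ)) *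
    (Real.log (y i) - Real.log (y k))

lemma Gfun_int {K : ℕ} (τ : ℝ) (hτ : 0 < τ) (β : Fin K → ℝ) (hβ : ∀ j, 0 < β j) (i : Fin K) :
    IntegrableOn (Gfun τ β i) (posO K) ∧
    ∫ y in posO K, Gfun τ β i y = ∑ k, (Real.log (β i) - Real.log (β k)) / τ := by
  have key : ∀ k, IntegrableOn (fun y : Fin K → ℝ => (∏ j, fa τ (β j) (y j)) *
      ((β i * y i ^ (-τ)) * (β k * y k ^ (-τ)) * (Real.log (y i) - Real.log (y k)))) (posO K) ∧
      ∫ y in posO K, (∏ j, fa τ (β j) (y j)) *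
      ((β i * y i ^ (-τ)) * (β k * y k ^ (-τ)) * (Real.log (y i) - Real.log (y k))) =
        (Real.log (β i) - Real.log (β k)) / τ := by
    intro k
    by_cases hik : i = k
    · subst hik; simp
    have h0 := fun j => fa_pow τ (β j) hτ (hβ j) 0
    simp only [pow_zero, mul_one, Nat.factorial_zero, Nat.cast_one] at h0
    have h1 := fun j => fa_pow τ (β j) hτ (hβ j) 1
    simp only [pow_one, Nat.factorial_one, Nat.cast_one] at h1
    have h2 := fun j => fa_log τ (β j) hτ (hβ j)
    have A := prod_int (fun j => fa τ (β j)) (fun y => β i * y ^ (-τ) * Real.log y)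
      (fun y => β k * y ^ (-τ)) i k hik (fun j => (h0 j).1) (fun j => (h0 j).2) (h2 i).1 (h1 k).1
    have B := prod_int (fun j => fa τ (β j)) (fun y => β i * y ^ (-τ))
      (fun y => β k * y ^ (-τ) * Real.log y) i k hik (fun j => (h0 j).1) (fun j => (h0 j).2)
      (h1 i).1 (h2 k).1
    have e : (fun y : Fin K → ℝ => (∏ j, fa τ (β j) (y j)) *
      ((β i * y i ^ (-τ)) * (β k * y k ^ (-τ)) * (Real.log (y i) - Real.log (y k)))) =
      fun y => (∏ j, fa τ (β j) (y j)) * (β i * y i ^ (-τ) * Real.log (y i) * (β k * y k ^ (-τ)))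
        - (∏ j, fa τ (β j) (y j)) * (β i * y i ^ (-τ) * (β k * y k ^ (-τ) * Real.log (y k))) := by
      funext y; ring
    rw [e]
    refine ⟨A.1.sub B.1, ?_⟩
    rw [integral_sub A.1 B.1, A.2, B.2, (h1 i).2, (h1 k).2, (h2 i).2, (h2 k).2]
    ring
  have e : Gfun τ β i = fun y => ∑ k, (∏ j, fa τ (β j) (y j)) *
      ((β i * y i ^ (-τ)) * (β k * y k ^ (-τ)) * (Real.log (y i) - Real.log (y k))) := by
    funext y
    rw [Gfun, Finset.mul_sum]
  rw [e]
  refine ⟨integrable_finsetSum _ fun k _ => (key k).1, ?_⟩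
  rw [integral_finsetSum _ fun k _ => (key k).1]
  exact Finset.sum_congr rfl fun k _ => (key k).2

lemma radial (n : ℕ) (τ : ℝ) (hτ : 0 < τ) (β : Fin (n + 1) → ℝ) (hβ : ∀ j, 0 < β j)
    (i : Fin (n + 1)) (x : Fin (n + 1) → ℝ) (hx : ∀ j, 0 < x j) :
    ∫ s in Set.Ioi (0 : ℝ), s ^ n * Gfun τ β i (s • x) =
      (∏ j, τ * β j * x j ^ (-τ - 1)) *
      (∑ k, (β i * x i ^ (-τ)) * (β k * x k ^ (-τ)) * (Real.log (x i) - Real.log (x k))) *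
      (((n + 2).factorial : ℝ) / (τ * (∑ j, β j * x j ^ (-τ)) ^ (n + 3))) := by
  set κ := ∑ j, β j * x j ^ (-τ) with hκ
  have hκ0 : 0 < κ := Finset.sum_pos
    (fun j _ => mul_pos (hβ j) (Real.rpow_pos_of_pos (hx j) _)) Finset.univ_nonempty
  have h := (fa_pow τ κ hτ hκ0 (n + 2)).2
  have hr : ((n + 2).factorial : ℝ) / (τ * κ ^ (n + 3)) =
      (1 / (τ * κ ^ (n + 3))) * ((n + 2).factorial : ℝ) := by ring
  rw [hr, ← h, ← integral_const_mul, ← integral_const_mul]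
  refine setIntegral_congr_fun measurableSet_Ioi fun s hs => ?_
  have hs : 0 < s := hs
  have hsn : s ^ (-τ - 1) = s ^ (-τ) / s := by
    rw [Real.rpow_sub hs, Real.rpow_one]
  have hp : ∏ j, fa τ (β j) (s * x j) =
      (∏ j, τ * β j * x j ^ (-τ - 1)) * (s ^ (-τ - 1)) ^ (n + 1) *
        Real.exp (-(κ * s ^ (-τ))) := by
    have : ∀ j, fa τ (β j) (s * x j) = (τ * β j * x j ^ (-τ - 1)) * s ^ (-τ - 1) *
        Real.exp (-(β j * x j ^ (-τ) * s ^ (-τ))) := by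
      intro j
      rw [fa, Real.mul_rpow hs.le (hx j).le, Real.mul_rpow hs.le (hx j).le]
      ring_nf
    simp_rw [this]
    rw [Finset.prod_mul_distrib, Finset.prod_mul_distrib, ← Real.exp_sum, Finset.sum_neg_distrib,
      ← Finset.sum_mul, Finset.prod_const,
      ← hκ, Finset.card_univ, Fintype.card_fin]
  have hsum : ∑ k, (β i * (s * x i) ^ (-τ)) * (β k * (s * x k) ^ (-τ)) *
      (Real.log (s * x i) - Real.log (s * x k)) = (s ^ (-τ)) ^ 2 *
      ∑ k, (β i * x i ^ (-τ)) * (β k * x k ^ (-τ)) * (Real.log (x i) - Real.log (x k)) := by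
    rw [Finset.mul_sum]
    refine Finset.sum_congr rfl fun k _ => ?_
    rw [Real.log_mul hs.ne' (hx i).ne', Real.log_mul hs.ne' (hx k).ne',
      Real.mul_rpow hs.le (hx i).le, Real.mul_rpow hs.le (hx k).le]
    ring
  simp only [Gfun, Pi.smul_apply, smul_eq_mul]
  rw [hp, hsum, fa, hsn]
  generalize Real.exp (-(κ * s ^ (-τ))) = E
  generalize s ^ (-τ) = r
  generalize (∏ j, τ * β j * x j ^ (-τ - 1)) = A
  generalize (∑ k, (β i * x i ^ (-τ)) * (β k * x k ^ (-τ)) * (Real.log (x i) - Real.log (x k))) = B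
  rw [div_pow, mul_pow]
  field_simp
  ring

lemma integrand_eq (n : ℕ) (τ : ℝ) (hτ : 0 < τ) (β : Fin (n + 1) → ℝ) (hβ : ∀ j, 0 < β j)
    (i : Fin (n + 1)) (x : Fin (n + 1) → ℝ) (hx : ∀ j, 0 < x j) :
    hfun (n + 1) β τ x * (((n + 1 : ℕ) : ℝ) *
          (Real.log (x i) / (kfun (n + 1) β τ x * x i ^ τ)
            - (∑ k, (β k / x k ^ τ) * Real.log (x k)) / (kfun (n + 1) β τ x ^ 2 * x i ^ τ))) =
    (((n + 1 : ℕ) : ℝ) * τ / (((n + 2).factorial : ℝ) * β i * (τ ^ (n + 1) * ∏ j, β j))) *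
      ∫ s in Set.Ioi (0 : ℝ), s ^ n * Gfun τ β i (s • x) := by
  rw [radial n τ hτ β hβ i x hx]
  have hr : ∀ j, β j * x j ^ (-τ) = β j / x j ^ τ := fun j => by
    rw [Real.rpow_neg (hx j).le, div_eq_mul_inv]
  have hk : ∑ j, β j * x j ^ (-τ) = kfun (n + 1) β τ x := by
    simp only [hr, kfun]
  have hκ0 : 0 < kfun (n + 1) β τ x := by
    rw [← hk]
    exact Finset.sum_pos
      (fun j _ => mul_pos (hβ j) (Real.rpow_pos_of_pos (hx j) _)) Finset.univ_nonempty
  have hs : ∑ k, (β i * x i ^ (-τ)) * (β k * x k ^ (-τ)) * (Real.log (x i) - Real.log (x k)) =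
      (β i / x i ^ τ) * (kfun (n + 1) β τ x * Real.log (x i) -
        ∑ k, (β k / x k ^ τ) * Real.log (x k)) := by
    rw [← hk, Finset.sum_mul, ← Finset.sum_sub_distrib, Finset.mul_sum]
    refine Finset.sum_congr rfl fun k _ => ?_
    rw [hr, hr]; ring
  have hh : hfun (n + 1) β τ x = (kfun (n + 1) β τ x ^ (n + 1))⁻¹ * ∏ j, x j ^ (-τ - 1) := by
    rw [hfun, ← kfun, Real.rpow_neg hκ0.le, Real.rpow_natCast]
    congr 1
    refine Finset.prod_congr rfl fun j _ => ?_
    congr 1; ring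
  have hp : ∏ j, τ * β j * x j ^ (-τ - 1) = τ ^ (n + 1) * (∏ j, β j) * ∏ j, x j ^ (-τ - 1) := by
    simp [Finset.prod_mul_distrib]
  rw [hs, hk, hh, hp]
  have hB : 0 < ∏ j, β j := Finset.prod_pos fun j _ => hβ j
  have hX := Real.rpow_pos_of_pos (hx i) τ
  have hbi := hβ i
  have hf : (0 : ℝ) < ((n + 2).factorial : ℝ) := by exact_mod_cast Nat.factorial_pos _
  generalize (∑ k, (β k / x k ^ τ) * Real.log (x k)) = L
  generalize kfun (n + 1) β τ x = κ at *
  generalize x i ^ τ = X at *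
  generalize ∏ j, x j ^ (-τ - 1) = A at *
  generalize (∏ j, β j) = B at *
  generalize ((n + 2).factorial : ℝ) = f at *
  field_simp
  ring

/-- The mixed β–τ components of the Fisher information of the Concrete distribution:
`∫ h(x) ∂²log h/∂β_i∂τ = −J_0 (∑_k log β_k − K log β_i)/((K+1) β_i τ)`. -/
theorem concrete_fisher_beta_tau
    (K : ℕ) (hK : 2 ≤ K) (τ : ℝ) (hτ : 0 < τ)
    (β : Fin K → ℝ) (hβ : ∀ i, 0 < β i) (i : Fin K) :
    ∫ x, hfun K β τ x * ((K : ℝ) *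
          (Real.log (x i) / (kfun K β τ x * x i ^ τ)
            - (∑ k, (β k / x k ^ τ) * Real.log (x k)) / (kfun K β τ x ^ 2 * x i ^ τ)))
        ∂(simplexMeasure K)
      = -(J0 K β τ * ((∑ k, Real.log (β k)) - (K : ℝ) * Real.log (β i)) /
            (((K : ℝ) + 1) * β i * τ)) := by
  obtain ⟨n, rfl⟩ : ∃ n, K = n + 1 := ⟨K - 1, by omega⟩
  have hfill : fillMap (n + 1) = fillS n 1 := funext (fillMap_eq n)
  have hmeas : Measurable (fillMap (n + 1)) := by
    rw [hfill]; exact measurable_fillS1 n 1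
  set Φ : (Fin (n + 1) → ℝ) → ℝ := fun x => hfun (n + 1) β τ x * (((n + 1 : ℕ) : ℝ) *
          (Real.log (x i) / (kfun (n + 1) β τ x * x i ^ τ)
            - (∑ k, (β k / x k ^ τ) * Real.log (x k)) / (kfun (n + 1) β τ x ^ 2 * x i ^ τ)))
    with hΦ
  have hΦm : Measurable Φ := by
    simp only [hΦ, hfun, kfun]
    fun_prop
  rw [simplexMeasure, integral_map hmeas.aemeasurable hΦm.aestronglyMeasurable, hfill]
  have hsub : openS n ⊆ {u : Fin n → ℝ | (∀ j, 0 ≤ u j) ∧ ∑ j, u j ≤ 1} := by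
    intro u hu
    have hu := mem_posO.1 hu
    refine ⟨fun j => ?_, ?_⟩
    · have := hu j.castSucc
      simp only [fillS, Fin.snoc_castSucc] at this
      exact this.le
    · have := hu (Fin.last n)
      simp only [fillS, Fin.snoc_last] at this
      linarith
  have hclosed : MeasurableSet {u : Fin n → ℝ | (∀ j, 0 ≤ u j) ∧ ∑ j, u j ≤ 1} := by
    measurability
  have hzero : ∀ u ∈ {u : Fin n → ℝ | (∀ j, 0 ≤ u j) ∧ ∑ j, u j ≤ 1} \ openS n,
      Φ (fillS n 1 u) = 0 := by
    rintro u ⟨⟨h1, h2⟩, h3⟩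
    have h3' : ¬ ∀ j, 0 < fillS n 1 u j := fun h => h3 (mem_posO.2 h)
    push Not at h3'
    obtain ⟨j, hj⟩ := h3'
    have hge : 0 ≤ fillS n 1 u j := by
      refine Fin.lastCases ?_ (fun j => ?_) j
      · simp only [fillS, Fin.snoc_last]; linarith
      · simp only [fillS, Fin.snoc_castSucc]; exact h1 j
    have h0 : fillS n 1 u j = 0 := le_antisymm hj hge
    have hp : ∏ j, fillS n 1 u j ^ (-(τ + 1)) = 0 := by
      refine Finset.prod_eq_zero (Finset.mem_univ j) ?_
      rw [h0, Real.zero_rpow (by linarith)]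
    simp only [hΦ, hfun, hp, mul_zero, zero_mul]
  have hset := setIntegral_eq_of_subset_of_forall_sdiff_eq_zero
    (μ := (volume : Measure (Fin n → ℝ))) hclosed hsub hzero
  refine Eq.trans (b := ∫ u in openS n, Φ (fillS n 1 u)) hset ?_
  obtain ⟨hGi, hGv⟩ := Gfun_int τ hτ β hβ i
  have hpol := polar_integral n _ hGi
  rw [hGv] at hpol
  rw [setIntegral_congr_fun (measurableSet_openS n) (fun u hu =>
    integrand_eq n τ hτ β hβ i (fillS n 1 u) (mem_posO.1 hu)), integral_const_mul, ← hpol,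
    ← Finset.sum_div, Finset.sum_sub_distrib, J0]
  have hB : 0 < ∏ j, β j := Finset.prod_pos fun j _ => hβ j
  have hbi := hβ i
  have hf : (0 : ℝ) < (n.factorial : ℝ) := by exact_mod_cast Nat.factorial_pos _
  have hfac : ((n + 2).factorial : ℝ) = ((n : ℝ) + 2) * (((n : ℝ) + 1) * (n.factorial : ℝ)) := by
    rw [Nat.factorial_succ, Nat.factorial_succ]; push_cast; ring
  simp only [Nat.add_sub_cancel, Finset.sum_const, Finset.card_univ, Fintype.card_fin,
    nsmul_eq_mul, hfac]
  push_cast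
  have h2 : (n : ℝ) + 1 + 1 = n + 2 := by ring
  rw [h2]
  field_simp
  ring
end
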